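/- arXiv:1205.1726 — 5 statements merged into one kernel-verified Lean document; each statement's English description precedes it below -/
import Mathlib

section
/- Let K be a Δ-field whose constant field K^Δ is algebraically closed, and let L|K be a finitely Δ-generated extension of Δ-fields with L^Δ = K^Δ. Then L|K is a Picard-Vessiot extension if and only if L|K is Δ-normal, i.e., for every commutative K-Δ-algebra R and every pair of K-Δ-morphisms τ_s, τ_t : L → R one has τ_t(L) ⊆ τ_s(L)R^Δ. -/
open scoped TensorProduct

/-- `S·T`: the set of finite sums `Σ sᵢ tᵢ` with `sᵢ ∈ S`, `tᵢ ∈ T`. -/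
def dotSet {R : Type*} [CommRing R] (S T : Set R) : Set R :=
  {x | ∃ (n : ℕ) (s t : Fin n → R), (∀ i, s i ∈ S) ∧ (∀ i, t i ∈ T) ∧ x = ∑ i, s i * t i}

/-- `ST`: the set of fractions `r/r'` with `r, r' ∈ S·T` and `r'` a unit of `R`. -/
def fracSet {R : Type*} [CommRing R] (S T : Set R) : Set R :=
  {x | ∃ r r', r ∈ dotSet S T ∧ r' ∈ dotSet S T ∧ IsUnit r' ∧ x * r' = r}

/-- The derivations `δ₁, …, δ_m` pairwise commute. -/
def CommutingDerivations {R : Type*} [CommRing R] {m : ℕ}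
    (δ : Fin m → Derivation ℤ R R) : Prop :=
  ∀ i j x, δ i (δ j x) = δ j (δ i x)

/-- The subfield of `Δ`-constants of a `Δ`-field. -/
def constantSubfield {K : Type*} [Field K] {m : ℕ}
    (δ : Fin m → Derivation ℤ K K) : Subfield K where
  carrier := {a | ∀ i, δ i a = 0}
  mul_mem' := by
    intro a b ha hb i
    simp [Derivation.leibniz, ha i, hb i]
  one_mem' := by intro i; simp
  add_mem' := by
    intro a b ha hb i
    simp [ha i, hb i]
  zero_mem' := by intro i; simp
  neg_mem' := by intro a ha i; simp [ha i]
  inv_mem' := by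
    intro a ha i
    rw [Derivation.leibniz_inv, ha i]
    simp

/-- `L|K` is a Picard-Vessiot extension: `L^Δ = K^Δ` and `L` is generated by a fundamental
solution matrix of an integrable linear system over `K`. -/
def IsPicardVessiot {m : ℕ} (K L : Type*) [Field K] [Field L] [Algebra K L]
    (δK : Fin m → Derivation ℤ K K) (δL : Fin m → Derivation ℤ L L) : Prop :=
  (∀ a : L, (∀ i, δL i a = 0) → a ∈ (algebraMap K L).range) ∧
  ∃ (n : ℕ) (A : Fin m → Matrix (Fin n) (Fin n) K) (Y : GL (Fin n) L),
    (∀ i j, (A j).map (fun x => δK i x) - (A i).map (fun x => δK j x)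
        = A i * A j - A j * A i) ∧
    (∀ i, ((Y : Matrix (Fin n) (Fin n) L)).map (fun x => δL i x)
        = (A i).map (algebraMap K L) * (Y : Matrix (Fin n) (Fin n) L)) ∧
    IntermediateField.adjoin K {x : L | ∃ p q, (Y : Matrix (Fin n) (Fin n) L) p q = x} = ⊤

/-- `L|K` is finitely `Δ`-generated: `L` is generated as a field over `K` by the elements
`θ(a)`, `a ∈ S`, `θ` a monomial in the derivations, for some finite `S ⊆ L`. -/
def FinitelyDeltaGenerated {m : ℕ} (K L : Type*) [Field K] [Field L] [Algebra K L]
    (δL : Fin m → Derivation ℤ L L) : Prop :=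
  ∃ S : Finset L, IntermediateField.adjoin K
    {x : L | ∃ a ∈ S, ∃ w : List (Fin m), x = w.foldr (fun i y => δL i y) a} = ⊤

universe u

/-- `L|K` is `Δ`-normal: for every commutative `K`-`Δ`-algebra `R` and every pair of
`K`-`Δ`-morphisms `τs, τt : L → R` one has `τt(L) ⊆ τs(L)R^Δ`. -/
def IsDeltaNormal {m : ℕ} (K L : Type*) [Field K] [Field L] [Algebra K L]
    (δK : Fin m → Derivation ℤ K K) (δL : Fin m → Derivation ℤ L L) : Prop :=
  ∀ (R : Type u) [CommRing R] [CharZero R] [Algebra K R]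
    (δR : Fin m → Derivation ℤ R R),
    CommutingDerivations δR →
    (∀ i a, δR i (algebraMap K R a) = algebraMap K R (δK i a)) →
    ∀ (τs τt : L →ₐ[K] R),
      (∀ i a, τs (δL i a) = δR i (τs a)) →
      (∀ i a, τt (δL i a) = δR i (τt a)) →
      ∀ b : L, τt b ∈ fracSet (Set.range ⇑τs) {a : R | ∀ i, δR i a = 0}

/-- The normality condition in the definition of strongly normal extensions: for every
`Δ`-field extension `M` of `K` and every pair of `K`-`Δ`-embeddings `τs, τt : L → M`
one has `τt(L) ⊆ τs(L)M^Δ` (field compositum inside `M`). -/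
def StronglyNormalCond {m : ℕ} (K L : Type*) [Field K] [Field L] [Algebra K L]
    (δK : Fin m → Derivation ℤ K K) (δL : Fin m → Derivation ℤ L L) : Prop :=
  ∀ (M : Type u) [Field M] [CharZero M] [Algebra K M]
    (δM : Fin m → Derivation ℤ M M),
    CommutingDerivations δM →
    (∀ i a, δM i (algebraMap K M a) = algebraMap K M (δK i a)) →
    ∀ (τs τt : L →ₐ[K] M),
      (∀ i a, τs (δL i a) = δM i (τs a)) →
      (∀ i a, τt (δL i a) = δM i (τt a)) →
      ∀ b : L, τt b ∈ fracSet (Set.range ⇑τs) {a : M | ∀ i, δM i a = 0}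

namespace PVN

open scoped Pointwise in
lemma mem_dotSet_iff {R : Type*} [CommRing R] (S T : Subring R) (x : R) :
    x ∈ dotSet (S : Set R) (T : Set R) ↔ x ∈ S.toAddSubmonoid * T.toAddSubmonoid := by
  constructor
  · rintro ⟨n, s, t, hs, ht, rfl⟩
    exact sum_mem fun i _ => AddSubmonoid.mul_mem_mul (hs i) (ht i)
  · intro h
    refine AddSubmonoid.mul_induction_on h ?_ ?_
    · intro m hm n hn
      exact ⟨1, fun _ => m, fun _ => n, fun _ => hm, fun _ => hn, by simp⟩
    · rintro x y ⟨n, s, t, hs, ht, rfl⟩ ⟨n', s', t', hs', ht', rfl⟩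
      refine ⟨n + n', Fin.append s s', Fin.append t t', ?_, ?_, ?_⟩
      · intro i
        refine Fin.addCases (fun i => ?_) (fun i => ?_) i
        · simpa using hs i
        · simpa using hs' i
      · intro i
        refine Fin.addCases (fun i => ?_) (fun i => ?_) i
        · simpa using ht i
        · simpa using ht' i
      · simp [Fin.sum_univ_add]

open scoped Pointwise in
lemma dotSet_mul {R : Type*} [CommRing R] (S T : Subring R) {x y : R}
    (hx : x ∈ dotSet (S : Set R) (T : Set R)) (hy : y ∈ dotSet (S : Set R) (T : Set R)) :
    x * y ∈ dotSet (S : Set R) (T : Set R) := by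
  rw [mem_dotSet_iff] at *
  refine AddSubmonoid.mul_induction_on hx ?_ ?_
  · intro s hs t ht
    refine AddSubmonoid.mul_induction_on hy ?_ ?_
    · intro s' hs' t' ht'
      rw [mul_mul_mul_comm]
      exact AddSubmonoid.mul_mem_mul (S.mul_mem hs hs') (T.mul_mem ht ht')
    · intro a b ha hb
      rw [mul_add]; exact add_mem ha hb
  · intro a b ha hb
    rw [add_mul]; exact add_mem ha hb

open scoped Pointwise in
lemma dotSet_add {R : Type*} [CommRing R] (S T : Subring R) {x y : R}
    (hx : x ∈ dotSet (S : Set R) (T : Set R)) (hy : y ∈ dotSet (S : Set R) (T : Set R)) :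
    x + y ∈ dotSet (S : Set R) (T : Set R) := by
  rw [mem_dotSet_iff] at *
  exact add_mem hx hy

lemma dotSet_left {R : Type*} [CommRing R] (S T : Subring R) {x : R}
    (hx : x ∈ S) : x ∈ dotSet (S : Set R) (T : Set R) :=
  ⟨1, fun _ => x, fun _ => 1, fun _ => hx, fun _ => T.one_mem, by simp⟩

/-- constants as a subring -/
def constRing {R : Type*} [CommRing R] {m : ℕ} (δ : Fin m → Derivation ℤ R R) : Subring R where
  carrier := {a | ∀ i, δ i a = 0}
  mul_mem' := by
    intro a b ha hb i
    simp [Derivation.leibniz, ha i, hb i]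
  one_mem' := by intro i; simp
  add_mem' := by
    intro a b ha hb i
    simp [ha i, hb i]
  zero_mem' := by intro i; simp
  neg_mem' := by intro a ha i; simp [ha i]

lemma map_mul_der {R : Type*} [CommRing R] {n : ℕ} (d : Derivation ℤ R R)
    (M N : Matrix (Fin n) (Fin n) R) :
    (M * N).map (fun x => d x) = M.map (fun x => d x) * N + M * N.map (fun x => d x) := by
  ext p q
  simp only [Matrix.map_apply, Matrix.mul_apply, Matrix.add_apply, map_sum, Derivation.leibniz,
    smul_eq_mul, ← Finset.sum_add_distrib]
  refine Finset.sum_congr rfl fun i _ => by ring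

theorem forward {m : ℕ}
    (K L : Type u) [Field K] [Field L] [Algebra K L]
    (δK : Fin m → Derivation ℤ K K) (δL : Fin m → Derivation ℤ L L)
    (h : IsPicardVessiot K L δK δL) : IsDeltaNormal.{u} K L δK δL := by
  obtain ⟨-, n, A, Y, -, hY, htop⟩ := h
  intro R _ _ _ δR hcR hKR τs τt hs ht b
  set T := constRing δR
  set S : Subring R := τs.toRingHom.range
  change τt b ∈ fracSet (S : Set R) (T : Set R)
  have hτ : ∀ τ : L →ₐ[K] R, (∀ i a, τ (δL i a) = δR i (τ a)) → ∀ i,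
      ((Y : Matrix (Fin n) (Fin n) L).map τ).map (fun x => δR i x) =
        (A i).map (algebraMap K R) * (Y : Matrix (Fin n) (Fin n) L).map τ := by
    intro τ h i
    have := congrArg (fun M => M.map τ) (hY i)
    simp only [Matrix.map_mul] at this
    rw [Matrix.map_map] at this ⊢
    rw [Matrix.map_map] at this
    convert this using 2
    · ext p; simp [h]
    · ext p q; simp
  set Z := (Y : Matrix (Fin n) (Fin n) L).map τs with hZ
  set Z' := ((Y⁻¹ : GL (Fin n) L) : Matrix (Fin n) (Fin n) L).map τs with hZ'
  set W := (Y : Matrix (Fin n) (Fin n) L).map τt with hW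
  have hZZ : Z * Z' = 1 := by
    rw [hZ, hZ', ← Matrix.map_mul, ← Units.val_mul]; simp
  have hZZ2 : Z' * Z = 1 := by
    rw [hZ, hZ', ← Matrix.map_mul, ← Units.val_mul]; simp
  set C := Z' * W with hC
  have hZC : Z * C = W := by rw [hC, ← mul_assoc, hZZ, one_mul]
  have hdC : ∀ i, C.map (fun x => δR i x) = 0 := by
    intro i
    have h1 := map_mul_der (δR i) Z C
    rw [hZC, hτ τt ht i, hτ τs hs i, mul_assoc, ← hW, hZC] at h1
    have h2 : Z * C.map (fun x => δR i x) = 0 := by simpa using h1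
    calc _ = Z' * (Z * C.map (fun x => δR i x)) := by rw [← mul_assoc, hZZ2, one_mul]
      _ = 0 := by rw [h2, mul_zero]
  have hCT : ∀ p q, C p q ∈ T := by
    intro p q i
    exact congrFun (congrFun (hdC i) p) q
  have hWd : ∀ p q, τt ((Y : Matrix (Fin n) (Fin n) L) p q) ∈ dotSet (S : Set R) (T : Set R) := by
    intro p q
    have : τt ((Y : Matrix (Fin n) (Fin n) L) p q) = ∑ j, Z p j * C j q := by
      rw [← Matrix.mul_apply, hZC]; rfl
    exact ⟨n, fun j => Z p j, fun j => C j q, fun j => ⟨_, rfl⟩, fun j => hCT j q, this⟩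
  have key : ∀ x ∈ Algebra.adjoin K {x : L | ∃ p q, (Y : Matrix (Fin n) (Fin n) L) p q = x},
      τt x ∈ dotSet (S : Set R) (T : Set R) := by
    intro x hx
    induction hx using Algebra.adjoin_induction with
    | mem x hx => obtain ⟨p, q, rfl⟩ := hx; exact hWd p q
    | algebraMap r =>
      apply dotSet_left
      exact ⟨algebraMap K L r, by simp⟩
    | add x y _ _ h1 h2 => rw [map_add]; exact dotSet_add S T h1 h2
    | mul x y _ _ h1 h2 => rw [map_mul]; exact dotSet_mul S T h1 h2
  have hb : b ∈ IntermediateField.adjoin K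
      {x : L | ∃ p q, (Y : Matrix (Fin n) (Fin n) L) p q = x} := by rw [htop]; trivial
  obtain ⟨r, hr, s, hs', rfl⟩ := IntermediateField.mem_adjoin_iff_div.1 hb
  by_cases h0 : s = 0
  · subst h0
    exact ⟨0, 1, dotSet_left S T S.zero_mem, dotSet_left S T S.one_mem, isUnit_one, by simp⟩
  · refine ⟨τt r, τt s, key r hr, key s hs', (IsUnit.mk0 s h0).map τt, ?_⟩
    rw [← map_mul, div_mul_cancel₀ _ h0]

section modules

variable {m : ℕ} {L M : Type*} [Field L] [AddCommGroup M] [Module L M]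

lemma span_const (δ : Fin m → Derivation ℤ L L) (D : Fin m → M →+ M)
    (hD : ∀ i (l : L) (x : M), D i (l • x) = δ i l • x + l • D i x)
    (I : Submodule L M) (hI : ∀ i, ∀ x ∈ I, D i x ∈ I)
    (hN : I ≤ Submodule.span L {d | ∀ i, D i d = 0}) :
    I ≤ Submodule.span L {d | d ∈ I ∧ ∀ i, D i d = 0} := by
  classical
  set J := Submodule.span L {d | d ∈ I ∧ ∀ i, D i d = 0} with hJ
  have main : ∀ s : Finset M, (∀ d ∈ s, ∀ i, D i d = 0) → ∀ l : M → L,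
      ∑ d ∈ s, l d • d ∈ I → ∑ d ∈ s, l d • d ∈ J := by
    intro s
    induction s using Finset.strongInduction with
    | H s ih =>
    intro hs l hl
    rcases s.eq_empty_or_nonempty with rfl | ⟨d0, hd0⟩
    · simp
    by_cases h0 : l d0 = 0
    · have : ∑ d ∈ s, l d • d = ∑ d ∈ s.erase d0, l d • d := by
        rw [← Finset.add_sum_erase s _ hd0, h0, zero_smul, zero_add]
      rw [this] at hl ⊢
      exact ih _ (Finset.erase_ssubset hd0) (fun d hd => hs d (Finset.mem_of_mem_erase hd)) l hl
    -- derivative formula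
    have hder : ∀ (i : Fin m) (f : M → L), D i (∑ d ∈ s, f d • d) = ∑ d ∈ s, δ i (f d) • d := by
      intro i f
      rw [map_sum]
      refine Finset.sum_congr rfl fun d hd => ?_
      rw [hD, hs d hd, smul_zero, add_zero]
    have hdrop : ∀ (f : M → L), ∀ e ∈ s, f e = 0 → ∑ d ∈ s, f d • d ∈ I →
        ∑ d ∈ s, f d • d ∈ J := by
      intro f e he hfe hf
      have : ∑ d ∈ s, f d • d = ∑ d ∈ s.erase e, f d • d := by
        rw [← Finset.add_sum_erase s _ he, hfe, zero_smul, zero_add]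
      rw [this] at hf ⊢
      exact ih _ (Finset.erase_ssubset he) (fun d hd => hs d (Finset.mem_of_mem_erase hd)) f hf
    set f : M → L := fun d => (l d0)⁻¹ * l d with hf
    have hy : ∑ d ∈ s, f d • d = (l d0)⁻¹ • ∑ d ∈ s, l d • d := by
      rw [Finset.smul_sum]
      exact Finset.sum_congr rfl fun d _ => by rw [hf, mul_smul]
    have hyI : ∑ d ∈ s, f d • d ∈ I := by rw [hy]; exact I.smul_mem _ hl
    have hf0 : f d0 = 1 := by simp [hf, h0]
    suffices hyJ : ∑ d ∈ s, f d • d ∈ J by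
      have := J.smul_mem (l d0) hyJ
      rwa [hy, smul_smul, mul_inv_cancel₀ h0, one_smul] at this
    by_cases hall : ∀ i, ∀ d ∈ s, δ i (f d) = 0
    · refine Submodule.subset_span ⟨hyI, fun i => ?_⟩
      rw [hder]
      exact Finset.sum_eq_zero fun d hd => by rw [hall i d hd, zero_smul]
    · push Not at hall
      obtain ⟨i, e, he, hne⟩ := hall
      have hfe : f e ≠ 0 := by
        intro h; rw [h] at hne; simp at hne
      have h1 : D i (∑ d ∈ s, f d • d) ∈ J := by
        have hmem := hI i _ hyI
        rw [hder] at hmem ⊢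
        exact hdrop _ d0 hd0 (by simp [hf0]) hmem
      have h2 : D i ((f e)⁻¹ • ∑ d ∈ s, f d • d) ∈ J := by
        have hmem := hI i _ (I.smul_mem (f e)⁻¹ hyI)
        have hh : (f e)⁻¹ • ∑ d ∈ s, f d • d = ∑ d ∈ s, ((f e)⁻¹ * f d) • d := by
          simp only [Finset.smul_sum]
          exact Finset.sum_congr rfl fun d _ => (mul_smul _ _ _).symm
        rw [hh, hder] at hmem ⊢
        exact hdrop _ e he (by simp [hfe]) hmem
      rw [hD] at h2
      have h3 := (Submodule.add_mem_iff_left J (J.smul_mem _ h1)).1 h2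
      have hne2 : δ i (f e)⁻¹ ≠ 0 := by
        rw [Derivation.leibniz_inv]
        simp [hfe, hne]
      exact (Submodule.smul_mem_iff J hne2).1 h3
  intro x hx
  obtain ⟨s, hs, hxs⟩ := Submodule.mem_span_finite_of_mem_span (hN hx)
  obtain ⟨l, -, rfl⟩ := Submodule.mem_span_finset.1 hxs
  exact main s (fun d hd => hs hd) l hx

lemma exists_coords (δ : Fin m → Derivation ℤ L L) (D : Fin m → M →+ M)
    (hD : ∀ i (l : L) (x : M), D i (l • x) = δ i l • x + l • D i x) :
    ∃ (ι : Set M) (c : ι → M →ₗ[L] L),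
      (∀ i a, ∀ x ∈ Submodule.span L {d | ∀ i, D i d = 0}, c a (D i x) = δ i (c a x)) ∧
      ∀ x, (∀ a, c a x = 0) → x = 0 := by
  obtain ⟨b, hb, hsp, hli⟩ := exists_linearIndependent L {d : M | ∀ i, D i d = 0}
  have hli' : LinearIndepOn L id b := hli
  let B := Module.Basis.extend hli'
  refine ⟨_, B.coord, ?_, ?_⟩
  · intro i a x hx
    rw [← hsp] at hx
    induction hx using Submodule.span_induction with
    | mem x h =>
      rw [hb h i, map_zero]
      have : x = B ⟨x, Module.Basis.subset_extend hli' h⟩ := by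
        simp [B, Module.Basis.extend_apply_self]
      rw [this, Module.Basis.coord_apply, Module.Basis.repr_self]
      classical
      rw [Finsupp.single_apply]
      split_ifs <;> simp
    | zero => simp
    | add x y _ _ h1 h2 => simp only [map_add, h1, h2]
    | smul l x _ h1 =>
      rw [hD, map_add, map_smul, map_smul, h1, map_smul, smul_eq_mul, smul_eq_mul, smul_eq_mul,
        Derivation.leibniz]
      simp only [smul_eq_mul]; ring
  · intro x hx
    exact B.forall_coord_eq_zero_iff.1 hx

end modules

section tensor

variable {K L : Type*} [Field K] [Field L] [Algebra K L]

/-- the induced additive map on `L ⊗ L` -/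
noncomputable def tadd (dK : Derivation ℤ K K) (dL : Derivation ℤ L L)
    (h : ∀ a, dL (algebraMap K L a) = algebraMap K L (dK a)) : L ⊗[K] L →+ L ⊗[K] L :=
  TensorProduct.liftAddHom
    (AddMonoidHom.mk' (fun a => AddMonoidHom.mk' (fun b => dL a ⊗ₜ[K] b + a ⊗ₜ[K] dL b)
      (by intro b b'; simp only [map_add, TensorProduct.tmul_add]; abel))
      (by intro a a'; ext b
          simp only [AddMonoidHom.mk'_apply, AddMonoidHom.add_apply, map_add,
            TensorProduct.add_tmul]; abel))
    (by
      intro r a b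
      have e : ∀ (r : K) (a b : L), (algebraMap K L r * a) ⊗ₜ[K] b
          = a ⊗ₜ[K] (algebraMap K L r * b) := by
        intro r a b
        rw [← Algebra.smul_def, ← Algebra.smul_def, TensorProduct.smul_tmul]
      have e2 : ∀ a, dL (r • a) = algebraMap K L r * dL a + algebraMap K L (dK r) * a := by
        intro a
        rw [Algebra.smul_def, Derivation.leibniz, h, smul_eq_mul, smul_eq_mul, mul_comm a]
      simp only [AddMonoidHom.mk'_apply, e2, TensorProduct.add_tmul, TensorProduct.tmul_add]
      rw [Algebra.smul_def, Algebra.smul_def, e, e, e]; abel)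

lemma tadd_tmul (dK : Derivation ℤ K K) (dL : Derivation ℤ L L)
    (h : ∀ a, dL (algebraMap K L a) = algebraMap K L (dK a)) (a b : L) :
    tadd dK dL h (a ⊗ₜ[K] b) = dL a ⊗ₜ[K] b + a ⊗ₜ[K] dL b := by
  simp [tadd]

/-- a derivation from an additive map -/
def mkDer {R : Type*} [CommRing R] (F : R →+ R) (h : ∀ x y, F (x * y) = x * F y + y * F x) :
    Derivation ℤ R R :=
  Derivation.mk' F.toIntLinearMap h

/-- the induced derivation on `L ⊗ L` -/
noncomputable def tder (dK : Derivation ℤ K K) (dL : Derivation ℤ L L)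
    (h : ∀ a, dL (algebraMap K L a) = algebraMap K L (dK a)) :=
  mkDer (tadd dK dL h) (by
    intro x y
    induction x using TensorProduct.induction_on with
    | zero => simp
    | add x x' h1 h2 => simp only [add_mul, map_add, h1, h2, mul_add]; abel
    | tmul a b =>
      induction y using TensorProduct.induction_on with
      | zero => simp
      | add y y' h1 h2 => simp only [add_mul, map_add, h1, h2, mul_add]; abel
      | tmul a' b' =>
        simp only [Algebra.TensorProduct.tmul_mul_tmul, tadd_tmul, Derivation.leibniz,
          smul_eq_mul, mul_add, TensorProduct.add_tmul, TensorProduct.tmul_add]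
        rw [mul_comm a' a, mul_comm b' b]
        abel)

lemma tder_tmul (dK : Derivation ℤ K K) (dL : Derivation ℤ L L)
    (h : ∀ a, dL (algebraMap K L a) = algebraMap K L (dK a)) (a b : L) :
    tder dK dL h (a ⊗ₜ[K] b) = dL a ⊗ₜ[K] b + a ⊗ₜ[K] dL b :=
  tadd_tmul dK dL h a b

lemma tder_smul (dK : Derivation ℤ K K) (dL : Derivation ℤ L L)
    (h : ∀ a, dL (algebraMap K L a) = algebraMap K L (dK a)) (a : L) (x : L ⊗[K] L) :
    tder dK dL h (a • x) = dL a • x + a • tder dK dL h x := by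
  induction x using TensorProduct.induction_on with
  | zero => simp
  | add x y h1 h2 => simp only [smul_add, map_add, h1, h2]; abel
  | tmul b c =>
    simp only [TensorProduct.smul_tmul', tder_tmul, smul_eq_mul, Derivation.leibniz,
      TensorProduct.add_tmul, smul_add, mul_comm b]
    abel

lemma tmul_indep {n : ℕ} (b : Fin n → L) (hb : LinearIndependent K b) (l : Fin n → L)
    (h : ∑ j, l j ⊗ₜ[K] b j = 0) : l = 0 := by
  classical
  have hinj : LinearMap.ker (Fintype.linearCombination K b) = ⊥ := by
    rw [LinearMap.ker_eq_bot]; exact hb.fintypeLinearCombination_injective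
  obtain ⟨g, hg⟩ := LinearMap.exists_leftInverse_of_injective _ hinj
  have hgb : ∀ i, g (b i) = Pi.single i 1 := by
    intro i
    have := LinearMap.congr_fun hg (Pi.single i 1)
    simpa using this
  funext j
  have := congrArg (fun x => TensorProduct.rid K L
    ((LinearMap.lTensor L ((LinearMap.proj j).comp g)) x)) h
  simpa [hgb, Pi.single_apply, map_sum, ite_smul] using this

/-- `x` lies in a finite dimensional `Δ`-stable subspace. -/
def IsFin {m : ℕ} (K : Type*) {L : Type*} [Field K] [Field L] [Algebra K L]
    (δL : Fin m → Derivation ℤ L L) : Set L :=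
  {x | ∃ V : Submodule K L, FiniteDimensional K V ∧ (∀ i, ∀ v ∈ V, δL i v ∈ V) ∧ x ∈ V}

lemma const_mem {m : ℕ} (δK : Fin m → Derivation ℤ K K) (δL : Fin m → Derivation ℤ L L)
    (h : ∀ i a, δL i (algebraMap K L a) = algebraMap K L (δK i a))
    (d : L ⊗[K] L) (hd : ∀ i, tder (δK i) (δL i) (h i) d = 0) :
    d ∈ Submodule.span L {x : L ⊗[K] L | ∃ f ∈ IsFin K δL, x = 1 ⊗ₜ f} := by
  classical
  let B := Module.Basis.ofVectorSpace K L
  let E := TensorProduct.equivFinsuppOfBasisLeft (N := L) B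
  set c := E d with hc
  let V : Submodule K L := Submodule.span K (c.support.image c)
  have hcV : ∀ j, c j ∈ V := by
    intro j
    by_cases hj : c j = 0
    · rw [hj]; exact V.zero_mem
    · exact Submodule.subset_span (by
        simp only [Finset.coe_image, Set.mem_image, Finset.mem_coe, Finsupp.mem_support_iff]
        exact ⟨j, hj, rfl⟩)
  have hdc : d = ∑ j ∈ c.support, B j ⊗ₜ[K] c j := by
    have : d = E.symm c := by simp [hc]
    rw [this, TensorProduct.equivFinsuppOfBasisLeft_symm_apply]; rfl
  have hcc : ∀ i j, δL i (c j) ∈ V := by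
    intro i j
    have h0 := hd i
    rw [hdc, map_sum] at h0
    simp only [tder_tmul, Finset.sum_add_distrib] at h0
    have h1 := congrArg (fun x => E x j) h0
    simp only [map_add, map_sum, Finsupp.add_apply, Finsupp.finsetSum_apply, E,
      TensorProduct.equivFinsuppOfBasisLeft_apply_tmul_apply, map_zero, Finsupp.zero_apply] at h1
    have h2 : ∑ x ∈ c.support, (B.repr (B x)) j • δL i (c x) = δL i (c j) := by
      by_cases hj : c j = 0
      · rw [hj, map_zero]
        refine Finset.sum_eq_zero fun x hx => ?_
        rw [Module.Basis.repr_self, Finsupp.single_apply, if_neg, zero_smul]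
        rintro rfl; exact (Finsupp.mem_support_iff.1 hx) hj
      · rw [Finset.sum_eq_single j]
        · simp
        · intro x _ hx; simp [hx]
        · intro hx; exact absurd (Finsupp.mem_support_iff.2 hj) hx
    rw [h2] at h1
    rw [← neg_eq_of_add_eq_zero_right h1]
    exact V.neg_mem (sum_mem fun x _ => V.smul_mem _ (hcV x))
  have hstab : ∀ i, ∀ v ∈ V, δL i v ∈ V := by
    intro i v hv
    induction hv using Submodule.span_induction with
    | mem x hx =>
      simp only [Finset.coe_image, Set.mem_image] at hx
      obtain ⟨j, -, rfl⟩ := hx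
      exact hcc i j
    | zero => simp
    | add x y _ _ h1 h2 => rw [map_add]; exact V.add_mem h1 h2
    | smul a x hx h1 =>
      rw [Algebra.smul_def, Derivation.leibniz, h]
      refine V.add_mem ?_ ?_
      · rw [smul_eq_mul, ← Algebra.smul_def]; exact V.smul_mem _ h1
      · rw [smul_eq_mul, mul_comm, ← Algebra.smul_def]; exact V.smul_mem _ hx
  have hfd : FiniteDimensional K V := FiniteDimensional.span_finset K _
  rw [hdc]
  refine sum_mem fun j _ => ?_
  have : B j ⊗ₜ[K] c j = B j • ((1 : L) ⊗ₜ[K] c j) := by simp [TensorProduct.smul_tmul']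
  rw [this]
  exact Submodule.smul_mem _ _ (Submodule.subset_span ⟨_, ⟨V, hfd, hstab, hcV j⟩, rfl⟩)

lemma frac_mem (F : IntermediateField K L) (b : L) (r r' : L ⊗[K] L)
    (hr : r ∈ Submodule.span L {x : L ⊗[K] L | ∃ f ∈ F, x = 1 ⊗ₜ f})
    (hr' : r' ∈ Submodule.span L {x : L ⊗[K] L | ∃ f ∈ F, x = 1 ⊗ₜ f})
    (h0 : r' ≠ 0) (h : (1 ⊗ₜ b) * r' = r) : b ∈ F := by
  by_contra hb
  obtain ⟨φ, hφb, hφF⟩ : ∃ φ : L →ₗ[F] F, φ b ≠ 0 ∧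
      Submodule.span F {(1 : L)} ≤ LinearMap.ker φ := by
    refine Submodule.exists_le_ker_of_notMem ?_
    intro hmem
    obtain ⟨a, ha⟩ := Submodule.mem_span_singleton.1 hmem
    apply hb
    rw [← ha, Algebra.smul_def, mul_one]
    exact a.2
  have hφ1 : φ 1 = 0 := hφF (Submodule.mem_span_singleton_self 1)
  let ψ : L →ₗ[K] L := (F.val.toLinearMap).comp (φ.restrictScalars K)
  have hψ : ∀ f ∈ F, ∀ x, ψ (f * x) = f * ψ x := by
    intro f hf x
    have := φ.map_smul ⟨f, hf⟩ x
    simpa [ψ, Algebra.smul_def] using congrArg (Subtype.val) this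
  have hψ1 : ψ 1 = 0 := by simp [ψ, hφ1]
  have hψb : ψ b ≠ 0 := by simpa [ψ] using hφb
  let Ψ := LinearMap.lTensor L ψ
  have hΨs : ∀ (l : L) (x : L ⊗[K] L), Ψ (l • x) = l • Ψ x := by
    intro l x
    induction x using TensorProduct.induction_on with
    | zero => simp
    | add x y h1 h2 => simp only [smul_add, map_add, h1, h2]
    | tmul a c => simp [Ψ, TensorProduct.smul_tmul']
  have k1 : ∀ x ∈ Submodule.span L {x : L ⊗[K] L | ∃ f ∈ F, x = 1 ⊗ₜ f}, Ψ x = 0 := by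
    intro x hx
    induction hx using Submodule.span_induction with
    | mem x hx =>
      obtain ⟨f, hf, rfl⟩ := hx
      have := hψ f hf 1
      simp only [Ψ, LinearMap.lTensor_tmul]
      rw [← mul_one f, this, hψ1]; simp
    | zero => simp
    | add x y _ _ h1 h2 => rw [map_add, h1, h2, add_zero]
    | smul l x _ h1 => rw [hΨs, h1, smul_zero]
  have k2 : ∀ x ∈ Submodule.span L {x : L ⊗[K] L | ∃ f ∈ F, x = 1 ⊗ₜ f},
      Ψ ((1 ⊗ₜ b) * x) = (1 ⊗ₜ ψ b) * x := by
    intro x hx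
    induction hx using Submodule.span_induction with
    | mem x hx =>
      obtain ⟨f, hf, rfl⟩ := hx
      simp only [Ψ, Algebra.TensorProduct.tmul_mul_tmul, LinearMap.lTensor_tmul]
      rw [mul_comm b, hψ f hf, mul_comm f]
    | zero => simp
    | add x y _ _ h1 h2 => rw [mul_add, map_add, h1, h2, mul_add]
    | smul l x _ h1 => rw [mul_smul_comm, hΨs, h1, mul_smul_comm]
  have h3 : ((1 : L) ⊗ₜ[K] ψ b) * r' = 0 := by rw [← k2 _ hr', h, k1 _ hr]
  apply h0
  calc r' = ((1 : L) ⊗ₜ[K] (ψ b)⁻¹) * (((1 : L) ⊗ₜ[K] ψ b) * r') := by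
        rw [← mul_assoc, Algebra.TensorProduct.tmul_mul_tmul, inv_mul_cancel₀ hψb, mul_one,
          ← Algebra.TensorProduct.one_def, one_mul]
    _ = 0 := by rw [h3, mul_zero]

end tensor

section back

variable {m : ℕ} {K L : Type u} [Field K] [Field L] [Algebra K L]

lemma exists_V_finset (δL : Fin m → Derivation ℤ L L) (t : Finset L)
    (ht : (t : Set L) ⊆ IsFin K δL) :
    ∃ V : Submodule K L, FiniteDimensional K V ∧ (∀ i, ∀ v ∈ V, δL i v ∈ V) ∧ ∀ x ∈ t, x ∈ V := by
  classical
  induction t using Finset.induction_on with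
  | empty => exact ⟨⊥, inferInstance, by simp, by simp⟩
  | insert a t _ ih =>
    obtain ⟨V, hV, hs, hVt⟩ := ih (fun x hx => ht (by simp_all))
    obtain ⟨W, hW, hsW, hWa⟩ := ht (show a ∈ _ by simp)
    refine ⟨V ⊔ W, Submodule.finiteDimensional_sup V W, ?_, ?_⟩
    · intro i v hv
      obtain ⟨x, hx, y, hy, rfl⟩ := Submodule.mem_sup.1 hv
      rw [map_add]
      exact Submodule.add_mem_sup (hs i x hx) (hsW i y hy)
    · intro x hx
      rcases Finset.mem_insert.1 hx with rfl | hx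
      · exact Submodule.mem_sup_right hWa
      · exact Submodule.mem_sup_left (hVt x hx)

lemma exists_V (δL : Fin m → Derivation ℤ L L) (S : Finset L)
    (hS : ∀ s ∈ S, s ∈ IntermediateField.adjoin K (IsFin K δL)) :
    ∃ V : Submodule K L, FiniteDimensional K V ∧ (∀ i, ∀ v ∈ V, δL i v ∈ V) ∧
      ∀ s ∈ S, s ∈ IntermediateField.adjoin K (V : Set L) := by
  classical
  have : ∃ t : Finset L, (t : Set L) ⊆ IsFin K δL ∧
      ∀ s ∈ S, s ∈ IntermediateField.adjoin K (t : Set L) := by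
    induction S using Finset.induction_on with
    | empty => exact ⟨∅, by simp, by simp⟩
    | insert a S _ ih =>
      obtain ⟨t, ht, htS⟩ := ih (fun s hs => hS s (by simp [hs]))
      obtain ⟨t', ht', hta⟩ := IntermediateField.exists_finset_of_mem_adjoin (hS a (by simp))
      refine ⟨t ∪ t', by simp [ht, ht'], ?_⟩
      intro s hs
      rcases Finset.mem_insert.1 hs with rfl | hs
      · exact IntermediateField.adjoin.mono K _ _ (by simp) hta
      · exact IntermediateField.adjoin.mono K _ _ (by simp) (htS s hs)
  obtain ⟨t, ht, htS⟩ := this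
  obtain ⟨V, hV, hs, hVt⟩ := exists_V_finset δL t ht
  exact ⟨V, hV, hs, fun s hs => IntermediateField.adjoin.mono K _ _ (fun x hx => hVt x hx) (htS s hs)⟩

lemma adjoin_stable (δK : Fin m → Derivation ℤ K K) (δL : Fin m → Derivation ℤ L L)
    (hcompat : ∀ i a, δL i (algebraMap K L a) = algebraMap K L (δK i a)) (S : Set L)
    (hS : ∀ i, ∀ s ∈ S, δL i s ∈ IntermediateField.adjoin K S) (i : Fin m) (x : L)
    (hx : x ∈ IntermediateField.adjoin K S) : δL i x ∈ IntermediateField.adjoin K S := by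
  induction hx using IntermediateField.adjoin_induction with
  | mem x hx => exact hS i x hx
  | algebraMap a => rw [hcompat]; exact IntermediateField.algebraMap_mem _ _
  | add x y _ _ h1 h2 => rw [map_add]; exact add_mem h1 h2
  | inv x hx h =>
    rw [Derivation.leibniz_inv]
    exact mul_mem (neg_mem (pow_mem (inv_mem hx) _)) h
  | mul x y hx hy h1 h2 =>
    rw [Derivation.leibniz]
    exact add_mem (mul_mem hx h2) (mul_mem hy h1)

/-- From a spanning set of solutions to the Picard-Vessiot property. -/
lemma pv_of_span (δK : Fin m → Derivation ℤ K K) (δL : Fin m → Derivation ℤ L L)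
    (hcL : CommutingDerivations δL)
    (hcompat : ∀ i a, δL i (algebraMap K L a) = algebraMap K L (δK i a))
    (hnonew : ∀ a : L, (∀ i, δL i a = 0) → a ∈ (algebraMap K L).range)
    {n : ℕ} (b : Fin n → L) (A : Fin m → Matrix (Fin n) (Fin n) K)
    (hA : ∀ i j, δL i (b j) = ∑ q, algebraMap K L (A i j q) * b q)
    (hspan : Submodule.span L {c : Fin n → L | ∀ i j,
      δL i (c j) = ∑ q, algebraMap K L (A i j q) * c q} = ⊤)
    (S : Finset L) (hSb : ∀ s ∈ S, s ∈ IntermediateField.adjoin K (Set.range b))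
    (hS : IntermediateField.adjoin K
      {x : L | ∃ a ∈ S, ∃ w : List (Fin m), x = w.foldr (fun i y => δL i y) a} = ⊤) :
    IsPicardVessiot K L δK δL := by
  refine ⟨hnonew, ?_⟩
  obtain ⟨t, ht, htsp, hli⟩ := exists_linearIndependent L {c : Fin n → L | ∀ i j,
      δL i (c j) = ∑ q, algebraMap K L (A i j q) * c q}
  rw [hspan] at htsp
  let B0 : Module.Basis t L (Fin n → L) := Module.Basis.mk hli (by simp [htsp])
  let e : t ≃ Fin n := B0.indexEquiv (Pi.basisFun L (Fin n))
  let B := B0.reindex e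
  have hBsol : ∀ q i j, δL i (B q j) = ∑ p, algebraMap K L (A i j p) * B q p := by
    intro q
    have : B q = ((e.symm q : t) : Fin n → L) := by simp [B, B0]
    rw [this]
    exact ht (e.symm q).2
  let Y0 : Matrix (Fin n) (Fin n) L := Matrix.of fun p q => B q p
  have hYu : IsUnit Y0 := by
    rw [← Matrix.linearIndependent_cols_iff_isUnit]
    exact B.linearIndependent
  obtain ⟨Y, hY⟩ := hYu
  have hYd : ∀ i, (Y : Matrix (Fin n) (Fin n) L).map (fun x => δL i x)
        = (A i).map (algebraMap K L) * (Y : Matrix (Fin n) (Fin n) L) := by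
    intro i
    rw [hY]
    ext p q
    simp only [Matrix.map_apply, Matrix.mul_apply, Y0, Matrix.of_apply]
    exact hBsol q i p
  have hY1 : (Y : Matrix (Fin n) (Fin n) L) * ((Y⁻¹ : GL (Fin n) L) : Matrix (Fin n) (Fin n) L)
      = 1 := by rw [← Units.val_mul]; simp
  have hY2 : ((Y⁻¹ : GL (Fin n) L) : Matrix (Fin n) (Fin n) L) * (Y : Matrix (Fin n) (Fin n) L)
      = 1 := by rw [← Units.val_mul]; simp
  have hAm : ∀ i j, ((A j).map (algebraMap K L)).map (fun x => δL i x) =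
      ((A j).map (fun x => δK i x)).map (algebraMap K L) := by
    intro i j; ext p q; simp [hcompat]
  refine ⟨n, A, Y, ?_, hYd, ?_⟩
  · intro i j
    have hinj : Function.Injective (fun M : Matrix (Fin n) (Fin n) K => M.map (algebraMap K L)) :=
      Matrix.map_injective (algebraMap K L).injective
    apply hinj
    have h1 : ((Y : Matrix (Fin n) (Fin n) L).map (fun x => δL j x)).map (fun x => δL i x) =
        ((Y : Matrix (Fin n) (Fin n) L).map (fun x => δL i x)).map (fun x => δL j x) := by
      ext p q; simp [hcL i j]
    rw [hYd, hYd, map_mul_der, map_mul_der, hYd, hYd, hAm, hAm, ← mul_assoc, ← mul_assoc,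
      ← add_mul, ← add_mul] at h1
    have h2 := congrArg (fun M => M * ((Y⁻¹ : GL (Fin n) L) : Matrix (Fin n) (Fin n) L)) h1
    simp only [mul_assoc, hY1, mul_one] at h2
    have e1 : ∀ M N : Matrix (Fin n) (Fin n) K, (M - N).map (algebraMap K L) =
        M.map (algebraMap K L) - N.map (algebraMap K L) := by
      intro M N; ext p q; simp
    simp only [e1, Matrix.map_mul]
    rw [sub_eq_sub_iff_add_eq_add, h2]
    abel
  · set E := IntermediateField.adjoin K
      {x : L | ∃ p q, (Y : Matrix (Fin n) (Fin n) L) p q = x} with hE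
    have hYE : ∀ p q, (Y : Matrix (Fin n) (Fin n) L) p q ∈ E := fun p q =>
      IntermediateField.subset_adjoin K _ ⟨p, q, rfl⟩
    have hstab : ∀ i, ∀ x ∈ E, δL i x ∈ E := by
      intro i x hx
      refine adjoin_stable δK δL hcompat _ ?_ i x hx
      rintro i _ ⟨p, q, rfl⟩
      have := congrFun (congrFun (hYd i) p) q
      simp only [Matrix.map_apply, Matrix.mul_apply] at this
      rw [this]
      exact sum_mem fun j _ => mul_mem (E.algebraMap_mem _) (hYE j q)
    -- the matrix all of whose columns are b
    let W : Matrix (Fin n) (Fin n) L := Matrix.of fun p _ => b p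
    have hWd : ∀ i, W.map (fun x => δL i x) = (A i).map (algebraMap K L) * W := by
      intro i; ext p q
      simp only [Matrix.map_apply, Matrix.mul_apply, W, Matrix.of_apply]
      exact hA i p
    let C := ((Y⁻¹ : GL (Fin n) L) : Matrix (Fin n) (Fin n) L) * W
    have hYC : (Y : Matrix (Fin n) (Fin n) L) * C = W := by
      simp only [C]; rw [← mul_assoc, hY1, one_mul]
    have hdC : ∀ i, C.map (fun x => δL i x) = 0 := by
      intro i
      have h1 := map_mul_der (δL i) Y C
      rw [hYC, hWd, hYd i, mul_assoc, hYC] at h1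
      have h2 : (Y : Matrix (Fin n) (Fin n) L) * C.map (fun x => δL i x) = 0 := by simpa using h1
      calc _ = ((Y⁻¹ : GL (Fin n) L) : Matrix (Fin n) (Fin n) L) *
            ((Y : Matrix (Fin n) (Fin n) L) * C.map (fun x => δL i x)) := by
              rw [← mul_assoc, hY2, one_mul]
        _ = 0 := by rw [h2, mul_zero]
    have hCE : ∀ p q, C p q ∈ E := by
      intro p q
      obtain ⟨a, ha⟩ := hnonew (C p q) (fun i => congrFun (congrFun (hdC i) p) q)
      rw [← ha]; exact E.algebraMap_mem a
    have hbE : ∀ p, b p ∈ E := by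
      intro p
      have : b p = W p p := rfl
      rw [this, ← hYC, Matrix.mul_apply]
      exact sum_mem fun j _ => mul_mem (hYE p j) (hCE j p)
    have hSE : ∀ s ∈ S, s ∈ E := by
      intro s hs
      have : IntermediateField.adjoin K (Set.range b) ≤ E := by
        rw [IntermediateField.adjoin_le_iff]
        rintro _ ⟨p, rfl⟩; exact hbE p
      exact this (hSb s hs)
    rw [← top_le_iff, ← hS, IntermediateField.adjoin_le_iff]
    rintro _ ⟨a, ha, w, rfl⟩
    change _ ∈ E
    induction w with
    | nil => exact hSE a ha
    | cons i w ih => exact hstab i _ ih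

theorem backward [CharZero K]
    (δK : Fin m → Derivation ℤ K K) (δL : Fin m → Derivation ℤ L L)
    (hcL : CommutingDerivations δL)
    (hcompat : ∀ i a, δL i (algebraMap K L a) = algebraMap K L (δK i a))
    (hfg : FinitelyDeltaGenerated K L δL)
    (hnonew : ∀ a : L, (∀ i, δL i a = 0) → a ∈ (algebraMap K L).range)
    (hnorm : IsDeltaNormal.{u} K L δK δL) : IsPicardVessiot K L δK δL := by
  classical
  have hchar : CharZero (L ⊗[K] L) :=
    charZero_of_injective_algebraMap (algebraMap K (L ⊗[K] L)).injective
  let δR := fun i => tder (δK i) (δL i) (hcompat i)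
  have hδt : ∀ i (a b : L), δR i (a ⊗ₜ[K] b) = δL i a ⊗ₜ[K] b + a ⊗ₜ[K] δL i b :=
    fun i a b => tder_tmul (δK i) (δL i) (hcompat i) a b
  have hδs : ∀ i (l : L) x, δR i (l • x) = δL i l • x + l • δR i x :=
    fun i l x => tder_smul (δK i) (δL i) (hcompat i) l x
  have hcomm : CommutingDerivations δR := by
    intro i j x
    induction x using TensorProduct.induction_on with
    | zero => simp
    | add x y h1 h2 => simp only [map_add, h1, h2]
    | tmul a b => simp only [hδt, map_add, hcL i j]; abel
  have hcR : ∀ i a, δR i (algebraMap K (L ⊗[K] L) a) = algebraMap K (L ⊗[K] L) (δK i a) := by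
    intro i a
    rw [Algebra.TensorProduct.algebraMap_apply, Algebra.TensorProduct.algebraMap_apply, hδt,
      hcompat]
    simp
  have hone : ∀ (a : L) (x : L ⊗[K] L), (a ⊗ₜ[K] (1 : L)) * x = a • x := by
    intro a x
    rw [Algebra.smul_def]; rfl
  set Dset : Set (L ⊗[K] L) := {d | ∀ i, δR i d = 0} with hDset
  set N := Submodule.span L Dset with hN
  have hdot : ∀ x ∈ dotSet (Set.range (Algebra.TensorProduct.includeLeft : L →ₐ[K] L ⊗[K] L)) Dset,
      x ∈ N := by
    rintro _ ⟨n, s, t, hs, ht, rfl⟩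
    refine sum_mem fun i _ => ?_
    obtain ⟨a, ha⟩ := hs i
    rw [← ha, Algebra.TensorProduct.includeLeft_apply, hone]
    exact N.smul_mem _ (Submodule.subset_span (ht i))
  have hfrac : ∀ b : L, ∃ r r', r ∈ N ∧ r' ∈ N ∧ IsUnit r' ∧ ((1 : L) ⊗ₜ[K] b) * r' = r := by
    intro b
    obtain ⟨r, r', hr, hr', hu, h⟩ := hnorm (L ⊗[K] L) δR hcomm hcR
      Algebra.TensorProduct.includeLeft Algebra.TensorProduct.includeRight
      (by intro i a; simp [hδt]) (by intro i a; simp [hδt]) b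
    exact ⟨r, r', hdot r hr, hdot r' hr', hu, h⟩
  have hNd : ∀ i, ∀ x ∈ N, δR i x ∈ N := by
    intro i x hx
    induction hx using Submodule.span_induction with
    | mem x hx => rw [hx i]; exact N.zero_mem
    | zero => simp
    | add x y _ _ h1 h2 => rw [map_add]; exact N.add_mem h1 h2
    | smul l x hx h => rw [hδs]; exact N.add_mem (N.smul_mem _ hx) (N.smul_mem _ h)
  have hDmul : ∀ x ∈ Dset, ∀ y ∈ Dset, x * y ∈ Dset := by
    intro x hx y hy i
    rw [Derivation.leibniz, hx i, hy i]; simp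
  have hNmul : ∀ x ∈ N, ∀ y ∈ N, x * y ∈ N := by
    intro x hx y hy
    have := Submodule.mul_mem_mul hx hy
    rw [hN, Submodule.span_mul_span] at this
    refine Submodule.span_mono ?_ this
    rintro _ ⟨x, hx, y, hy, rfl⟩
    exact hDmul x hx y hy
  have h1N : (1 : L ⊗[K] L) ∈ N := Submodule.subset_span (fun i => by simp)
  -- `L` is generated by finite elements
  have hFtop : ∀ b : L, b ∈ IntermediateField.adjoin K (IsFin K δL) := by
    intro b
    have hle : N ≤ Submodule.span L
        {x : L ⊗[K] L | ∃ f ∈ IntermediateField.adjoin K (IsFin K δL), x = 1 ⊗ₜ f} := by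
      rw [hN, Submodule.span_le]
      intro d hd
      refine Submodule.span_mono ?_ (const_mem δK δL hcompat d hd)
      rintro _ ⟨f, hf, rfl⟩
      exact ⟨f, IntermediateField.subset_adjoin K _ hf, rfl⟩
    obtain ⟨r, r', hr, hr', hu, h⟩ := hfrac b
    exact frac_mem _ b r r' (hle hr) (hle hr') hu.ne_zero h
  obtain ⟨S, hS⟩ := hfg
  obtain ⟨V, hVfd, hVs, hSV⟩ := exists_V δL S (fun s _ => hFtop s)
  let bV := Module.finBasis K V
  set n := Module.finrank K V
  let b : Fin n → L := fun j => (bV j : L)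
  have hbli : LinearIndependent K b := bV.linearIndependent.map' V.subtype (Submodule.ker_subtype V)
  have hVrep : ∀ v (hv : v ∈ V), v = ∑ q, algebraMap K L (bV.repr ⟨v, hv⟩ q) * b q := by
    intro v hv
    have := congrArg Subtype.val (bV.sum_repr ⟨v, hv⟩)
    simp only [Submodule.coe_sum, Submodule.coe_smul, Algebra.smul_def] at this
    exact this.symm
  let A : Fin m → Matrix (Fin n) (Fin n) K := fun i => Matrix.of fun j q =>
    bV.repr ⟨δL i (b j), hVs i _ (bV j).2⟩ q
  have hA : ∀ i j, δL i (b j) = ∑ q, algebraMap K L (A i j q) * b q := fun i j =>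
    hVrep _ (hVs i _ (bV j).2)
  have hSb : ∀ s ∈ S, s ∈ IntermediateField.adjoin K (Set.range b) := by
    intro s hs
    have : IntermediateField.adjoin K (V : Set L) ≤ IntermediateField.adjoin K (Set.range b) := by
      rw [IntermediateField.adjoin_le_iff]
      intro v hv
      rw [hVrep v hv]
      exact sum_mem fun q _ => mul_mem (IntermediateField.algebraMap_mem _ _)
        (IntermediateField.subset_adjoin K _ ⟨q, rfl⟩)
    exact this (hSV s hs)
  refine pv_of_span δK δL hcL hcompat hnonew b A hA ?_ S hSb hS
  -- common unit denominator
  have hu : ∃ u ∈ N, IsUnit u ∧ ∀ j, ((1 : L) ⊗ₜ[K] b j) * u ∈ N := by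
    have : ∀ s : Finset (Fin n), ∃ u ∈ N, IsUnit u ∧ ∀ j ∈ s, ((1 : L) ⊗ₜ[K] b j) * u ∈ N := by
      intro s
      induction s using Finset.induction_on with
      | empty => exact ⟨1, h1N, isUnit_one, by simp⟩
      | insert a s _ ih =>
        obtain ⟨u, huN, huu, hus⟩ := ih
        obtain ⟨r, r', hr, hr', hur, h⟩ := hfrac (b a)
        refine ⟨u * r', hNmul _ huN _ hr', huu.mul hur, ?_⟩
        intro j hj
        rcases Finset.mem_insert.1 hj with rfl | hj
        · rw [mul_left_comm, h]; exact hNmul _ huN _ hr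
        · rw [← mul_assoc]; exact hNmul _ (hus j hj) _ hr'
    obtain ⟨u, h1, h2, h3⟩ := this Finset.univ
    exact ⟨u, h1, h2, fun j => h3 j (Finset.mem_univ j)⟩
  obtain ⟨u, huN, huu, hub⟩ := hu
  let I : Submodule L (L ⊗[K] L) :=
    { carrier := {x | x ∈ N ∧ ∀ j, ((1 : L) ⊗ₜ[K] b j) * x ∈ N}
      add_mem' := fun {x y} hx hy => ⟨N.add_mem hx.1 hy.1, fun j => by
        rw [mul_add]; exact N.add_mem (hx.2 j) (hy.2 j)⟩
      zero_mem' := ⟨N.zero_mem, fun j => by rw [mul_zero]; exact N.zero_mem⟩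
      smul_mem' := fun l x hx => ⟨N.smul_mem _ hx.1, fun j => by
        rw [mul_smul_comm]; exact N.smul_mem _ (hx.2 j)⟩ }
  have htmul : ∀ (a : K) (c : L), (1 : L) ⊗ₜ[K] (algebraMap K L a * c)
      = algebraMap K L a • ((1 : L) ⊗ₜ[K] c) := by
    intro a c
    rw [← Algebra.smul_def, TensorProduct.smul_tmul', TensorProduct.tmul_smul,
      TensorProduct.smul_tmul', Algebra.smul_def, smul_eq_mul]
  have hbder : ∀ i j (x : L ⊗[K] L), ((1 : L) ⊗ₜ[K] δL i (b j)) * x =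
      ∑ q, algebraMap K L (A i j q) • (((1 : L) ⊗ₜ[K] b q) * x) := by
    intro i j x
    rw [hA, TensorProduct.tmul_sum, Finset.sum_mul]
    exact Finset.sum_congr rfl fun q _ => by rw [htmul, smul_mul_assoc]
  have hleib : ∀ i j (x : L ⊗[K] L), δR i (((1 : L) ⊗ₜ[K] b j) * x) =
      ((1 : L) ⊗ₜ[K] δL i (b j)) * x + ((1 : L) ⊗ₜ[K] b j) * δR i x := by
    intro i j x
    rw [Derivation.leibniz, hδt, smul_eq_mul, smul_eq_mul]
    simp only [Derivation.map_one_eq_zero, TensorProduct.zero_tmul, zero_add]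
    ring
  let D : Fin m → (L ⊗[K] L) →+ (L ⊗[K] L) := fun i => (δR i : _ →+ _)
  have hDapp : ∀ i x, D i x = δR i x := fun i x => rfl
  have hDs : ∀ i (l : L) (x : L ⊗[K] L), D i (l • x) = δL i l • x + l • D i x := hδs
  have hIspan := span_const δL D hDs I (by
    intro i x hx
    refine ⟨hNd i x hx.1, fun j => ?_⟩
    have h1 : ((1 : L) ⊗ₜ[K] b j) * δR i x = δR i (((1 : L) ⊗ₜ[K] b j) * x)
        - ((1 : L) ⊗ₜ[K] δL i (b j)) * x := by rw [hleib]; ring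
    rw [hDapp, h1]
    refine N.sub_mem (hNd i _ (hx.2 j)) ?_
    rw [hbder]
    exact sum_mem fun q _ => N.smul_mem _ (hx.2 q)) (fun x hx => hx.1)
  obtain ⟨ι, c, hcd, hc0⟩ := exists_coords δL D hDs
  by_contra hne
  obtain ⟨f, hf0, hfk⟩ := Submodule.exists_le_ker_of_lt_top _ (lt_top_iff_ne_top.2 hne)
  let l : Fin n → L := fun j => f (Pi.single j 1)
  have hfl : ∀ v : Fin n → L, f v = ∑ j, l j * v j := by
    intro v
    conv_lhs => rw [pi_eq_sum_univ' v]
    rw [map_sum]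
    refine Finset.sum_congr rfl fun j _ => ?_
    rw [map_smul, smul_eq_mul, mul_comm]
  let w : L ⊗[K] L := ∑ j, l j ⊗ₜ[K] b j
  have hw : ∀ x, w * x = ∑ j, l j • (((1 : L) ⊗ₜ[K] b j) * x) := by
    intro x
    simp only [w, Finset.sum_mul]
    refine Finset.sum_congr rfl fun j _ => ?_
    rw [← smul_mul_assoc, TensorProduct.smul_tmul', smul_eq_mul, mul_one]
  have hwd : ∀ d, d ∈ I → (∀ i, D i d = 0) → w * d = 0 := by
    intro d hdI hd
    apply hc0
    intro a
    rw [hw, map_sum]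
    have hsol : (fun j => c a (((1 : L) ⊗ₜ[K] b j) * d)) ∈ {c : Fin n → L | ∀ i j,
        δL i (c j) = ∑ q, algebraMap K L (A i j q) * c q} := by
      intro i j
      change δL i (c a (((1 : L) ⊗ₜ[K] b j) * d)) = _
      rw [← hcd i a _ (hdI.2 j), hDapp, hleib, ← hDapp, hd i, mul_zero, add_zero, hbder, map_sum]
      simp only [map_smul, smul_eq_mul]
    have := hfk (Submodule.subset_span hsol)
    rw [LinearMap.mem_ker, hfl] at this
    simpa only [map_smul, smul_eq_mul] using this
  have hwI : ∀ x ∈ I, w * x = 0 := by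
    intro x hx
    have hx' := hIspan hx
    clear hx
    induction hx' using Submodule.span_induction with
    | mem x hx => exact hwd x hx.1 hx.2
    | zero => simp
    | add x y _ _ h1 h2 => rw [mul_add, h1, h2, add_zero]
    | smul l x _ h => rw [mul_smul_comm, h, smul_zero]
  have hw0 : w = 0 := (huu.mul_left_eq_zero).1 (hwI u ⟨huN, hub⟩)
  have hl0 := tmul_indep b hbli l hw0
  apply hf0
  refine LinearMap.ext fun v => ?_
  rw [hfl]
  simp [hl0]

end back

end PVN

/-- Let `K` be a `Δ`-field whose constant field `K^Δ` is algebraically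
closed, and let `L|K` be a finitely `Δ`-generated extension of `Δ`-fields with
`L^Δ = K^Δ`. Then `L|K` is Picard-Vessiot iff `L|K` is `Δ`-normal. -/
theorem picardVessiot_iff_deltaNormal {m : ℕ}
    (K L : Type u) [Field K] [CharZero K] [Field L] [CharZero L] [Algebra K L]
    (δK : Fin m → Derivation ℤ K K) (δL : Fin m → Derivation ℤ L L)
    (hcK : CommutingDerivations δK) (hcL : CommutingDerivations δL)
    (hcompat : ∀ i a, δL i (algebraMap K L a) = algebraMap K L (δK i a))
    (halgcl : IsAlgClosed ↥(constantSubfield δK))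
    (hfg : FinitelyDeltaGenerated K L δL)
    (hnonew : ∀ a : L, (∀ i, δL i a = 0) → a ∈ (algebraMap K L).range) :
    IsPicardVessiot K L δK δL ↔ IsDeltaNormal.{u} K L δK δL := by
  exact ⟨PVN.forward K L δK δL, PVN.backward δK δL hcL hcompat hfg hnonew⟩
end

section
/- Let L|K be a Δ-normal extension of Δ-fields. Then for every intermediate Δ-field K ⊆ M ⊆ L (i.e., a subfield of L containing K that is stable under all derivations in Δ), the extension L|M is Δ-normal. -/
universe u

set_option synthInstance.maxHeartbeats 400000 in
/-- If `L|K` is `Δ`-normal and `K ⊆ M ⊆ L` is an intermediate `Δ`-field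
(a subfield of `L` containing `K` stable under all derivations), then `L|M` is `Δ`-normal. -/
theorem isDeltaNormal_of_intermediate {m : ℕ}
    (K L : Type u) [Field K] [CharZero K] [Field L] [CharZero L] [Algebra K L]
    (δK : Fin m → Derivation ℤ K K) (δL : Fin m → Derivation ℤ L L)
    (hcK : CommutingDerivations δK) (hcL : CommutingDerivations δL)
    (hcompat : ∀ i a, δL i (algebraMap K L a) = algebraMap K L (δK i a))
    (hnormal : IsDeltaNormal.{u} K L δK δL)
    (M : IntermediateField K L)
    (hMstable : ∀ i, ∀ x ∈ M, δL i x ∈ M)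
    (δM : Fin m → Derivation ℤ ↥M ↥M)
    (hδM : ∀ i (x : ↥M), (δM i x : L) = δL i (x : L)) :
    IsDeltaNormal.{u} ↥M L δM δL := by
  intro R _ _ _ δR hcR hR τs τt hs ht b
  letI : Algebra K R := ((algebraMap M R).comp (algebraMap K M)).toAlgebra
  have h1 : ∀ a : K, algebraMap K R a = algebraMap M R (algebraMap K M a) := fun _ => rfl
  have h2 : ∀ a : K, algebraMap M L (algebraMap K M a) = algebraMap K L a := fun _ => rfl
  have hK : ∀ i (a : K), δM i (algebraMap K M a) = algebraMap K M (δK i a) := by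
    intro i a
    apply Subtype.ext
    rw [hδM]
    exact hcompat i a
  let σs : L →ₐ[K] R :=
    { (τs : L →+* R) with
      commutes' := fun a => by
        rw [h1, ← τs.commutes, h2]; rfl }
  let σt : L →ₐ[K] R :=
    { (τt : L →+* R) with
      commutes' := fun a => by
        rw [h1, ← τt.commutes, h2]; rfl }
  exact hnormal R δR hcR (fun i a => by rw [h1, h1, hR, hK]) σs σt hs ht b
end

section
/- Let K be a Δ-field whose constant field K^Δ is algebraically closed, let L|K be a strongly normal extension of Δ-fields, and let K° denote the relative algebraic closure of K inside L (the set of elements of L algebraic over K, which is an intermediate Δ-field). If L|K° is a Picard-Vessiot extension, then L|K is a Picard-Vessiot extension. -/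
open scoped TensorProduct

universe u

namespace PVaux

/-- nilradical is differential -/
theorem nilp_der {S : Type*} [CommRing S] [Algebra ℚ S] (d : Derivation ℤ S S) {a : S}
    (ha : IsNilpotent a) : IsNilpotent (d a) := by
  obtain ⟨n, hn⟩ := ha
  have key : ∀ k, k ≤ n → a ^ (n - k) * (d a) ^ (2 * k) = 0 := by
    intro k
    induction k with
    | zero => intro _; simpa using hn
    | succ k ih =>
      intro hk
      have h1 := ih (by omega)
      obtain ⟨r, hr⟩ : ∃ r, n - k = r + 1 := ⟨n - k - 1, by omega⟩
      have hr' : n - (k + 1) = r := by omega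
      rw [hr] at h1
      rw [hr']
      have h2 := congrArg d h1
      rw [Derivation.leibniz, Derivation.leibniz_pow, Derivation.leibniz_pow, map_zero] at h2
      simp only [smul_eq_mul, nsmul_eq_mul, Nat.add_sub_cancel] at h2
      have h3 : ((r + 1 : ℕ) : S) * (a ^ r * d a ^ (2 * (k + 1))) = 0 := by
        rcases k with _ | k
        · have h4 := congrArg (· * d a) h2
          simp at h4
          push_cast
          linear_combination h4
        · have h4 := congrArg (· * d a) h2
          have h5 : 2 * (k + 1) - 1 = 2 * k + 1 := by omega
          rw [h5] at h4
          simp only [zero_mul] at h4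
          push_cast at h4 ⊢
          linear_combination h4 - (2 * (k+1) : S) * d (d a) * h1
      have hu : IsUnit ((r + 1 : ℕ) : S) := by
        have : ((r + 1 : ℕ) : S) = algebraMap ℚ S ((r + 1 : ℕ) : ℚ) := by simp
        rw [this]
        exact (IsUnit.mk0 _ (by positivity)).map _
      exact (hu.mul_right_eq_zero).1 h3
  exact ⟨2 * n, by simpa using key n le_rfl⟩

theorem minPrime_der {S : Type*} [CommRing S] [Algebra ℚ S] (d : Derivation ℤ S S)
    {P : Ideal S} (hP : P ∈ minimalPrimes S) {a : S} (ha : a ∈ P) : d a ∈ P := by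
  have hp : P.IsPrime := hP.1.1
  obtain ⟨s, hs, hsa⟩ : ∃ s, s ∉ P ∧ IsNilpotent (s * a) := by
    by_cases h0 : (0 : S) ∈ P.primeCompl ⊔ Submonoid.powers a
    · obtain ⟨y, hy, z, ⟨n, rfl⟩, hyz⟩ := Submonoid.mem_sup.1 h0
      refine ⟨y, hy, n + 1, ?_⟩
      simp only at hyz
      rw [mul_pow]
      calc y ^ (n + 1) * a ^ (n + 1) = (y * a ^ n) * (y ^ n * a) := by ring
        _ = 0 := by rw [hyz, zero_mul]
    · exfalso
      obtain ⟨q, hq, -, hd⟩ := Ideal.exists_le_prime_disjoint (⊥ : Ideal S)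
        (P.primeCompl ⊔ Submonoid.powers a) (by
          rw [Set.disjoint_left]
          intro x hx hx'
          simp only [Submodule.bot_coe, Set.mem_singleton_iff] at hx
          subst hx
          exact h0 hx')
      rw [Set.disjoint_left] at hd
      have hqP : q ≤ P := by
        intro x hx
        by_contra hxP
        exact hd hx ((le_sup_left : P.primeCompl ≤ _) hxP)
      have := hP.2 ⟨hq, bot_le⟩ hqP ha
      exact hd this ((le_sup_right : Submonoid.powers a ≤ _) (Submonoid.mem_powers a))
  have h1 := nilp_der d hsa
  rw [Derivation.leibniz, smul_eq_mul, smul_eq_mul] at h1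
  have hmem : ∀ x : S, IsNilpotent x → x ∈ P := fun x ⟨n, hn⟩ =>
    hp.mem_of_pow_mem n (hn ▸ P.zero_mem)
  have h2 := hmem _ h1
  have h3 : s * d a ∈ P := (P.add_mem_iff_left (P.mul_mem_right _ ha)).1 h2
  exact (hp.mem_or_mem h3).resolve_left hs

/-- Extension of a derivation to the residue field. -/
theorem exists_der {S M : Type*} [CommRing S] (P : Ideal S) [P.IsPrime] [Field M]
    [Algebra (S ⧸ P) M] [IsFractionRing (S ⧸ P) M] (d : Derivation ℤ S S)
    (hd : ∀ a ∈ P, d a ∈ P) :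
    ∃ D : Derivation ℤ M M, ∀ s, D (algebraMap (S ⧸ P) M (Ideal.Quotient.mk P s))
      = algebraMap (S ⧸ P) M (Ideal.Quotient.mk P (d s)) := by
  let π : S →+* M := (algebraMap (S ⧸ P) M).comp (Ideal.Quotient.mk P)
  have hπ : ∀ s, s ∈ P → π s = 0 := fun s hs => by
    simp [π, Ideal.Quotient.eq_zero_iff_mem.2 hs]
  let f : S →+* DualNumber M :=
    { toFun := fun s => TrivSqZeroExt.inl (π s) + TrivSqZeroExt.inr (π (d s))
      map_one' := by ext <;> simp
      map_zero' := by ext <;> simp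
      map_add' := fun a b => by ext <;> simp
      map_mul' := fun a b => by ext <;> simp [mul_comm] }
  let g : (S ⧸ P) →+* DualNumber M := Ideal.Quotient.lift P f (fun a ha => by
    ext <;> simp [f, hπ a ha, hπ _ (hd a ha)])
  have hg : ∀ x, (g x).fst = algebraMap (S ⧸ P) M x := by
    intro x
    obtain ⟨s, rfl⟩ := Ideal.Quotient.mk_surjective x
    simp [g, f, π]
  have hu : ∀ y : nonZeroDivisors (S ⧸ P), IsUnit (g y) := by
    intro y
    rw [TrivSqZeroExt.isUnit_iff_isUnit_fst, hg]
    exact IsLocalization.map_units M y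
  let h : M →+* DualNumber M := IsLocalization.lift hu
  have hh : ∀ x, h (algebraMap _ M x) = g x := fun x => IsLocalization.lift_eq hu x
  have hfst : (TrivSqZeroExt.fstHom M M M).toRingHom.comp h = RingHom.id M := by
    apply IsLocalization.ringHom_ext (nonZeroDivisors (S ⧸ P))
    ext x
    simp [hh, hg]
  have hfst' : ∀ x, (h x).fst = x := fun x => by
    have := congrArg (fun k : M →+* M => k x) hfst
    simpa using this
  refine ⟨Derivation.mk' (AddMonoidHom.toIntLinearMap
    { toFun := fun x => (h x).snd, map_zero' := by simp, map_add' := by simp }) ?_, ?_⟩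
  · intro a b
    change (h (a * b)).snd = a • (h b).snd + b • (h a).snd
    rw [map_mul, TrivSqZeroExt.snd_mul, hfst', hfst', op_smul_eq_smul]
  · intro s
    change (h (algebraMap _ M _)).snd = _
    rw [hh]
    change (f s).snd = π (d s)
    change (TrivSqZeroExt.inl (π s) + TrivSqZeroExt.inr (π (d s)) : DualNumber M).snd = π (d s)
    rw [TrivSqZeroExt.snd_add, TrivSqZeroExt.snd_inl, TrivSqZeroExt.snd_inr, zero_add]

theorem comm_ext {B M : Type*} [CommRing B] [IsDomain B] [Field M] [Algebra B M] [IsFractionRing B M]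
    (D : Derivation ℤ M M) (h : ∀ b, D (algebraMap B M b) = 0) (x : M) : D x = 0 := by
  obtain ⟨a, b, hb, rfl⟩ := IsFractionRing.div_surjective (A := B) x
  rw [Derivation.leibniz_div, h, h]; simp

theorem exists_field {m : ℕ} {S : Type u} [CommRing S] (δ : Fin m → Derivation ℤ S S)
    (hc : CommutingDerivations δ) (P : Ideal S) (hP : P.IsPrime)
    (hd : ∀ i, ∀ a ∈ P, δ i a ∈ P) :
    ∃ (M : Type u) (_ : Field M) (π : S →+* M) (δM : Fin m → Derivation ℤ M M),
      CommutingDerivations δM ∧ (∀ i s, δM i (π s) = π (δ i s)) ∧ ∀ s, π s = 0 ↔ s ∈ P := by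
  obtain ⟨M, _, _, _⟩ : ∃ (M : Type u) (_ : Field M) (_ : Algebra (S ⧸ P) M),
    IsFractionRing (S ⧸ P) M := ⟨FractionRing (S ⧸ P), inferInstance, inferInstance, inferInstance⟩
  choose D hD using fun i => exists_der (M := M) P (δ i) (hd i)
  refine ⟨M, inferInstance, (algebraMap (S ⧸ P) M).comp (Ideal.Quotient.mk P), D, ?_, ?_, ?_⟩
  · intro i j x
    have := comm_ext (B := S ⧸ P) ⁅D i, D j⁆ (fun b => by
      obtain ⟨s, rfl⟩ := Ideal.Quotient.mk_surjective b
      rw [Derivation.commutator_apply, hD, hD, hD, hD, hc i j, sub_self]) x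
    rw [Derivation.commutator_apply] at this
    exact sub_eq_zero.1 this
  · intro i s
    simp [hD]
  · intro s
    simp only [RingHom.comp_apply]
    rw [map_eq_zero_iff _ (IsFractionRing.injective (S ⧸ P) M), Ideal.Quotient.eq_zero_iff_mem]

theorem exists_der_of_add {S : Type*} [CommRing S] (g : S →+ S)
    (h : ∀ x y, g (x * y) = x * g y + y * g x) : ∃ D : Derivation ℤ S S, ∀ x, D x = g x :=
  ⟨Derivation.mk' g.toIntLinearMap h, fun _ => rfl⟩

/-- The derivation on the tensor product. -/
theorem exists_tensor_der {K L : Type*} [Field K] [Field L] [Algebra K L]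
    (dK : Derivation ℤ K K) (d : Derivation ℤ L L)
    (h : ∀ a, d (algebraMap K L a) = algebraMap K L (dK a)) :
    ∃ D : (L ⊗[K] L) →+ (L ⊗[K] L), (∀ x y, D (x * y) = x * D y + y * D x) ∧ ∀ a b : L,
      D (a ⊗ₜ b) = d a ⊗ₜ b + a ⊗ₜ d b := by
  let f : L →+ L →+ L ⊗[K] L :=
    { toFun := fun a =>
        { toFun := fun b => d a ⊗ₜ b + a ⊗ₜ d b
          map_zero' := by simp
          map_add' := fun x y => by simp only [TensorProduct.tmul_add, map_add]; abel }
      map_zero' := by ext; simp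
      map_add' := fun x y => by ext; simp [TensorProduct.add_tmul]; abel }
  have hsm : ∀ (r : K) (x : L), d (r • x) = r • d x + dK r • x := by
    intro r x
    rw [Algebra.smul_def, Derivation.leibniz, h]
    simp [Algebra.smul_def, mul_comm]
  let g : L ⊗[K] L →+ L ⊗[K] L := TensorProduct.liftAddHom f (by
    intro r a b
    simp only [f, AddMonoidHom.coe_mk, ZeroHom.coe_mk, hsm, TensorProduct.add_tmul,
      TensorProduct.tmul_add, TensorProduct.smul_tmul]
    abel)
  have hg : ∀ a b, g (a ⊗ₜ b) = d a ⊗ₜ b + a ⊗ₜ d b := fun a b => rfl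
  refine ⟨g, ?_, hg⟩
  intro x y
  induction x using TensorProduct.induction_on with
  | zero => simp
  | add x₁ x₂ h1 h2 => rw [add_mul, map_add, h1, h2, map_add]; ring
  | tmul a b =>
    induction y using TensorProduct.induction_on with
    | zero => simp
    | add x₁ x₂ h1 h2 => rw [mul_add, map_add, h1, h2, map_add]; ring
    | tmul c e =>
      simp only [Algebra.TensorProduct.tmul_mul_tmul, hg, Derivation.leibniz, smul_eq_mul, mul_add,
        TensorProduct.add_tmul, TensorProduct.tmul_add]
      rw [mul_comm c (d a), mul_comm c a, mul_comm e b, mul_comm e (d b)]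
      abel

open Polynomial in
theorem exists_tensor {m : ℕ} (K L : Type u) [Field K] [CharZero K] [Field L] [Algebra K L]
    (δK : Fin m → Derivation ℤ K K) (δL : Fin m → Derivation ℤ L L)
    (hcL : CommutingDerivations δL)
    (hcompat : ∀ i a, δL i (algebraMap K L a) = algebraMap K L (δK i a))
    (α : L) (hα : IsIntegral K α) :
    ∃ (S : Type u) (_ : CommRing S) (_ : Algebra ℚ S) (s t : L →+* S)
      (δ : Fin m → Derivation ℤ S S), CommutingDerivations δ ∧
      (∀ i a, δ i (s a) = s (δL i a)) ∧ (∀ i a, δ i (t a) = t (δL i a)) ∧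
      (∀ a, s (algebraMap K L a) = t (algebraMap K L a)) ∧
      ∀ p : L[X], p.eval₂ s (t α) = 0 → (minpoly K α).map (algebraMap K L) ∣ p := by
  choose g hg1 hg2 using fun i => exists_tensor_der (δK i) (δL i) (hcompat i)
  choose D hD using fun i => exists_der_of_add (g i) (hg1 i)
  refine ⟨L ⊗[K] L, inferInstance,
    (((algebraMap K (L ⊗[K] L)).comp (algebraMap ℚ K))).toAlgebra,
    Algebra.TensorProduct.includeLeftRingHom, (Algebra.TensorProduct.includeRight (R := K) (A := L) (B := L)).toRingHom,
    D, ?_, ?_, ?_, ?_, ?_⟩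
  · intro i j x
    simp only [hD]
    induction x using TensorProduct.induction_on with
    | zero => simp
    | add x y hx hy => simp only [map_add, hx, hy]
    | tmul a b => simp only [hg2, map_add, hcL i j]; abel
  · intro i a
    simp [hD, hg2]
  · intro i a
    simp [hD, hg2]
  · intro a
    simp [Algebra.algebraMap_eq_smul_one, TensorProduct.smul_tmul]
  · intro p hp
    set f := (minpoly K α).map (algebraMap K L) with hf
    have hfm : f.Monic := (minpoly.monic hα).map _
    have hfd : f.natDegree = (minpoly K α).natDegree := natDegree_map _
    have ht : (Algebra.TensorProduct.includeRight (R := K) (A := L) (B := L)).toRingHom α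
        = (1 : L) ⊗ₜ[K] α := rfl
    rw [ht] at hp
    have hf0 : f.eval₂ Algebra.TensorProduct.includeLeftRingHom ((1 : L) ⊗ₜ[K] α) = 0 := by
      rw [hf, eval₂_map]
      have h1 : (Algebra.TensorProduct.includeLeftRingHom.comp (algebraMap K L) : K →+* L ⊗[K] L)
          = (Algebra.TensorProduct.includeRight (R := K) (A := L) (B := L)).toRingHom.comp
            (algebraMap K L) := by
        ext a
        simp [Algebra.algebraMap_eq_smul_one, TensorProduct.smul_tmul, Algebra.TensorProduct.one_def]
      rw [h1, ← ht, ← Polynomial.hom_eval₂, ← Polynomial.aeval_def, minpoly.aeval, map_zero]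
    rw [← Polynomial.modByMonic_eq_zero_iff_dvd hfm]
    set r := p %ₘ f with hr
    have hr0 : r.eval₂ Algebra.TensorProduct.includeLeftRingHom ((1 : L) ⊗ₜ[K] α) = 0 := by
      have := Polynomial.modByMonic_add_div p f
      rw [← this, eval₂_add, eval₂_mul, hf0, zero_mul, add_zero] at hp
      exact hp
    by_cases hf1 : f = 1
    · rw [hr, hf1, Polynomial.modByMonic_one]
    have hrd : r.natDegree < (minpoly K α).natDegree := by
      rw [← hfd]; exact Polynomial.natDegree_modByMonic_lt p hfm hf1
    rw [Polynomial.eval₂_eq_sum_range' _ hrd] at hr0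
    have hv := linearIndependent_pow (K := K) α
    ext k
    rw [coeff_zero]
    by_cases hk : k < (minpoly K α).natDegree
    swap
    · exact Polynomial.coeff_eq_zero_of_natDegree_lt (by omega)
    obtain ⟨φ, hφ⟩ := LinearMap.exists_extend ((Finsupp.lapply (⟨k, hk⟩ : Fin _)).comp hv.repr)
    have hφ' : ∀ j : Fin (minpoly K α).natDegree, φ (α ^ (j : ℕ)) = if (j : ℕ) = k then 1 else 0 := by
      intro j
      have h1 := congrArg (fun l => l ⟨α ^ (j : ℕ), Submodule.subset_span ⟨j, rfl⟩⟩) hφ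
      simp only [LinearMap.comp_apply, Submodule.subtype_apply] at h1
      rw [h1, hv.repr_eq_single j _ rfl]
      simp [Finsupp.single_apply, Fin.ext_iff]
    have h2 := congrArg ((TensorProduct.rid K L).toLinearMap ∘ₗ LinearMap.lTensor L φ) hr0
    rw [map_sum, map_zero, Finset.sum_range] at h2
    simp [hφ'] at h2
    rw [Finset.sum_eq_single (⟨k, hk⟩ : Fin _)] at h2
    · simpa using h2
    · intro b _ hb
      rw [if_neg (fun h => hb (Fin.ext h))]
    · simp

open Polynomial in
/-- The Δ-field `M` with two embeddings of `L` such that `g(τt α) = 0`. -/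
theorem exists_two_embeddings {m : ℕ} (K L : Type u) [Field K] [CharZero K] [Field L] [Algebra K L]
    (δK : Fin m → Derivation ℤ K K) (δL : Fin m → Derivation ℤ L L)
    (hcL : CommutingDerivations δL)
    (hcompat : ∀ i a, δL i (algebraMap K L a) = algebraMap K L (δK i a))
    (α : L) (hα : IsIntegral K α) (g : L[X]) (hg : Irreducible g)
    (hgf : g ∣ (minpoly K α).map (algebraMap K L)) :
    ∃ (M : Type u) (_ : Field M) (s t : L →+* M)
      (δ : Fin m → Derivation ℤ M M), CommutingDerivations δ ∧
      (∀ i a, δ i (s a) = s (δL i a)) ∧ (∀ i a, δ i (t a) = t (δL i a)) ∧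
      (∀ a, s (algebraMap K L a) = t (algebraMap K L a)) ∧
      g.eval₂ s (t α) = 0 := by
  obtain ⟨S, _, _, s, t, δ, hc, hs, ht, hst, hS⟩ :=
    exists_tensor K L δK δL hcL hcompat α hα
  obtain ⟨h, hh⟩ := hgf
  have hsep : ((minpoly K α).map (algebraMap K L)).Separable :=
    ((minpoly.irreducible hα).separable).map
  have hcop : IsCoprime g h := by
    rw [hh] at hsep
    exact hsep.isCoprime
  have hnil : ¬ IsNilpotent (h.eval₂ s (t α)) := by
    rintro ⟨n, hn⟩
    rw [← eval₂_pow] at hn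
    have h1 := hS _ hn
    have h2 : g ∣ h ^ n := (Dvd.intro _ hh.symm).trans h1
    have h3 : IsUnit g := (hcop.pow_right (n := n)).isUnit_of_dvd' dvd_rfl h2
    exact hg.not_isUnit h3
  obtain ⟨P, hP, hPh⟩ : ∃ P ∈ minimalPrimes S, h.eval₂ s (t α) ∉ P := by
    by_contra hcon
    push Not at hcon
    apply hnil
    have : h.eval₂ s (t α) ∈ (⊥ : Ideal S).radical := by
      rw [← Ideal.sInf_minimalPrimes, Ideal.mem_sInf]
      exact fun {I} hI => hcon I hI
    exact this
  have hPp : P.IsPrime := hP.1.1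
  obtain ⟨M, _, π, δM, hcM, hπ, hk⟩ := exists_field δ hc P hPp (fun i a ha => minPrime_der _ hP ha)
  refine ⟨M, inferInstance, π.comp s, π.comp t, δM, hcM, ?_, ?_, ?_, ?_⟩
  · intro i a; simp [hπ, hs]
  · intro i a; simp [hπ, ht]
  · intro a; simp [hst]
  · rw [RingHom.comp_apply, ← Polynomial.hom_eval₂, hk]
    refine (hPp.mem_or_mem (y := h.eval₂ s (t α)) ?_).resolve_right hPh
    rw [← eval₂_mul, ← hh, eval₂_map]
    have h1 : s.comp (algebraMap K L) = t.comp (algebraMap K L) := RingHom.ext hst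
    rw [h1, ← Polynomial.hom_eval₂, ← Polynomial.aeval_def, minpoly.aeval, map_zero]
    exact P.zero_mem

theorem lin_disj {m : ℕ} {C L M : Type*} [Field C] [Field L] [Field M] [Algebra C L] [Algebra L M]
    [Algebra C M] [IsScalarTower C L M] (δL : Fin m → Derivation ℤ L L)
    (δM : Fin m → Derivation ℤ M M)
    (hδ : ∀ i a, δM i (algebraMap L M a) = algebraMap L M (δL i a))
    (hC : ∀ a : L, (∀ i, δL i a = 0) → ∃ c : C, algebraMap C L c = a)
    {ι : Type*} (d : ι → M) (hd : ∀ k i, δM i (d k) = 0) (hli : LinearIndependent C d) :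
    LinearIndependent L d := by
  classical
  rw [linearIndependent_iff']
  intro s
  induction s using Finset.induction_on with
  | empty => intro g _ i hi; simp at hi
  | insert i0 s hi0 ih =>
    intro g hg
    have h0 : g i0 = 0 := by
      by_contra hne
      let h : ι → L := fun i => g i / g i0
      have hh : ∑ i ∈ insert i0 s, h i • d i = 0 := by
        have : ∑ i ∈ insert i0 s, h i • d i = (g i0)⁻¹ • ∑ i ∈ insert i0 s, g i • d i := by
          rw [Finset.smul_sum]
          refine Finset.sum_congr rfl fun i _ => ?_
          rw [smul_smul, ← div_eq_inv_mul]
        rw [this, hg, smul_zero]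
      have hi1 : h i0 = 1 := div_self hne
      have hcst : ∀ i ∈ s, ∀ j, δL j (h i) = 0 := by
        intro i hi j
        have h1 := congrArg (δM j) hh
        rw [map_sum, map_zero, Finset.sum_insert hi0] at h1
        have h2 : ∀ k, δM j (h k • d k) = δL j (h k) • d k := by
          intro k
          rw [Algebra.smul_def, Derivation.leibniz, hd, hδ, smul_zero, zero_add, smul_eq_mul,
            mul_comm, Algebra.smul_def]
        simp only [h2] at h1
        rw [hi1, Derivation.map_one_eq_zero, zero_smul, zero_add] at h1
        exact ih _ h1 i hi
      have hc : ∀ i ∈ insert i0 s, ∃ c : C, algebraMap C L c = h i := by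
        intro i hi
        rcases Finset.mem_insert.1 hi with rfl | hi
        · exact ⟨1, by rw [map_one, hi1]⟩
        · exact hC _ (hcst i hi)
      choose! c hc using hc
      rw [linearIndependent_iff'] at hli
      have h3 := hli (insert i0 s) c (by
        rw [← hh]
        refine Finset.sum_congr rfl fun i hi => ?_
        rw [← hc i hi, algebraMap_smul]) i0 (Finset.mem_insert_self _ _)
      have h4 := hc i0 (Finset.mem_insert_self _ _)
      rw [h3, map_zero, hi1] at h4
      exact zero_ne_one h4
    rw [Finset.sum_insert hi0, h0, zero_smul, zero_add] at hg
    intro i hi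
    rcases Finset.mem_insert.1 hi with rfl | hi
    · exact h0
    · exact ih g hg i hi

theorem nullst {C A : Type*} [Field C] [IsAlgClosed C] [CommRing A] [IsDomain A] [Algebra C A]
    [Algebra.FiniteType C A] (d : A) (hd : d ≠ 0) : ∃ χ : A →ₐ[C] C, χ d ≠ 0 := by
  have hJ : IsJacobsonRing A := isJacobsonRing_of_finiteType (A := C)
  have hj : (⊥ : Ideal A).jacobson = ⊥ :=
    hJ.out Ideal.isPrime_bot.isRadical
  obtain ⟨I, hI, hdI⟩ : ∃ I : Ideal A, I.IsMaximal ∧ d ∉ I := by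
    by_contra hcon
    push Not at hcon
    apply hd
    have : d ∈ (⊥ : Ideal A).jacobson := by
      rw [Ideal.jacobson, Ideal.mem_sInf]
      exact fun {J} hJ => hcon J hJ.2
    rw [hj] at this
    simpa using this
  let _ : Field (A ⧸ I) := Ideal.Quotient.field I
  have hfin : Module.Finite C (A ⧸ I) := finite_of_finite_type_of_isJacobsonRing C (A ⧸ I)
  have hbij : Function.Bijective (algebraMap C (A ⧸ I)) :=
    IsAlgClosed.algebraMap_bijective_of_isIntegral
  let e : C ≃ₐ[C] (A ⧸ I) := AlgEquiv.ofBijective (Algebra.ofId C (A ⧸ I)) hbij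
  refine ⟨e.symm.toAlgHom.comp (Ideal.Quotient.mkₐ C I), ?_⟩
  intro h
  apply hdI
  have h' : e.symm (Ideal.Quotient.mk I d) = 0 := h
  rw [map_eq_zero_iff _ e.symm.injective] at h'
  exact Ideal.Quotient.eq_zero_iff_mem.1 h'

section spec

variable {m : ℕ} {C L M : Type*} [Field C] [Field L] [Field M] [Algebra C L] [Algebra L M]
    [Algebra C M] [IsScalarTower C L M]

/-- `L ⊗ D → M`. -/
noncomputable def jmap (C L : Type*) {M : Type*} [Field C] [Field L] [Field M] [Algebra C L]
    [Algebra L M] [Algebra C M] [IsScalarTower C L M] (D : Subalgebra C M) : L ⊗[C] D →ₐ[C] M :=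
  Algebra.TensorProduct.productMap (IsScalarTower.toAlgHom C L M) D.val

theorem jmap_tmul (D : Subalgebra C M) (l : L) (d : D) :
    jmap C L D (l ⊗ₜ d) = algebraMap L M l * d := by
  simp [jmap]

/-- `L ⊗ D → L`. -/
noncomputable def pmap {D : Subalgebra C M} (χ : D →ₐ[C] C) : L ⊗[C] D →ₐ[C] L :=
  Algebra.TensorProduct.productMap (AlgHom.id C L) ((Algebra.ofId C L).comp χ)

theorem pmap_tmul {D : Subalgebra C M} (χ : D →ₐ[C] C) (l : L) (d : D) :
    pmap χ (l ⊗ₜ d) = l * algebraMap C L (χ d) := by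
  simp [pmap, Algebra.ofId_apply]

theorem jmap_inj (δL : Fin m → Derivation ℤ L L)
    (δM : Fin m → Derivation ℤ M M)
    (hδ : ∀ i a, δM i (algebraMap L M a) = algebraMap L M (δL i a))
    (hC : ∀ a : L, (∀ i, δL i a = 0) → ∃ c : C, algebraMap C L c = a)
    (D : Subalgebra C M) (hD : ∀ d ∈ D, ∀ i, δM i d = 0) :
    Function.Injective (jmap C L D) := by
  rw [injective_iff_map_eq_zero]
  intro x hx
  classical
  let b := Module.Basis.ofVectorSpace C D
  have hli : LinearIndependent C (fun k => (b k : M)) :=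
    b.linearIndependent.map' D.val.toLinearMap (LinearMap.ker_eq_bot.2 Subtype.val_injective)
  have hli' := lin_disj δL δM hδ hC _ (fun k i => hD _ (b k).2 i) hli
  let e := TensorProduct.equivFinsuppOfBasisRight (M := L) b
  obtain ⟨y, rfl⟩ := e.symm.surjective x
  rw [TensorProduct.equivFinsuppOfBasisRight_symm_apply] at hx ⊢
  rw [Finsupp.sum, map_sum] at hx
  have : y = 0 := by
    rw [linearIndependent_iff'] at hli'
    have h1 := hli' y.support y (by
      rw [← hx]
      refine Finset.sum_congr rfl fun k _ => ?_
      rw [jmap_tmul, Algebra.smul_def])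
    ext k
    by_contra hk
    exact hk (h1 k (Finsupp.mem_support_iff.2 hk))
  rw [this]; simp

theorem exists_chi [IsAlgClosed C] (D : Subalgebra C M) (hD : D.FG) (x : L ⊗[C] D) (hx : x ≠ 0) :
    ∃ χ : D →ₐ[C] C, pmap (L := L) χ x ≠ 0 := by
  classical
  have : Algebra.FiniteType C D := (Subalgebra.fg_iff_finiteType D).1 hD
  let b := Module.Basis.ofVectorSpace C L
  let e := TensorProduct.equivFinsuppOfBasisLeft (N := D) b
  obtain ⟨y, rfl⟩ := e.symm.surjective x
  have hy : y ≠ 0 := by rintro rfl; simp at hx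
  obtain ⟨k, hk⟩ := Finsupp.ne_iff.1 hy
  obtain ⟨χ, hχ⟩ := nullst (C := C) (y k) hk
  refine ⟨χ, fun h => hχ ?_⟩
  have hsym : e.symm y = y.sum fun i n => b i ⊗ₜ n := by
    simp [e]
  rw [hsym, Finsupp.sum, map_sum] at h
  have hli := b.linearIndependent
  rw [linearIndependent_iff'] at hli
  refine hli y.support (fun i => χ (y i)) ?_ k (Finsupp.mem_support_iff.2 hk)
  rw [← h]
  refine Finset.sum_congr rfl fun i _ => ?_
  rw [pmap_tmul, Algebra.smul_def, mul_comm]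

theorem exists_finset_dotSet (δM : Fin m → Derivation ℤ M M) (r : M)
    (hr : r ∈ dotSet (Set.range (algebraMap L M)) {a : M | ∀ i, δM i a = 0}) :
    ∃ F : Finset M, (∀ a ∈ F, ∀ i, δM i a = 0) ∧
      ∀ D : Subalgebra C M, (F : Set M) ⊆ D → ∃ x, jmap C L D x = r := by
  classical
  obtain ⟨n, s, t, hs, ht, rfl⟩ := hr
  refine ⟨Finset.univ.image t, ?_, ?_⟩
  · intro a ha i
    obtain ⟨k, -, rfl⟩ := Finset.mem_image.1 ha
    exact ht k i
  · intro D hD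
    choose l hl using hs
    refine ⟨∑ k, l k ⊗ₜ ⟨t k, hD (Finset.mem_image_of_mem t (Finset.mem_univ k))⟩, ?_⟩
    rw [map_sum]
    refine Finset.sum_congr rfl fun k _ => ?_
    rw [jmap_tmul, hl]

end spec

open Polynomial in
theorem spec {m : ℕ} {K C L M : Type*} [Field K] [Field C] [IsAlgClosed C] [Field L] [Field M]
    [Algebra K L] [Algebra C L] [Algebra L M]
    [Algebra C M] [IsScalarTower C L M] (δL : Fin m → Derivation ℤ L L)
    (δM : Fin m → Derivation ℤ M M)
    (hδ : ∀ i a, δM i (algebraMap L M a) = algebraMap L M (δL i a))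
    (hC : ∀ a : L, (∀ i, δL i a = 0) → ∃ c : C, algebraMap C L c = a)
    (hCc : ∀ i (c : C), δL i (algebraMap C L c) = 0)
    (t : L →+* M) (hst : ∀ a : K, t (algebraMap K L a) = algebraMap L M (algebraMap K L a))
    (ht : ∀ i a, δM i (t a) = t (δL i a))
    (hfrac : ∀ b, t b ∈ fracSet (Set.range (algebraMap L M)) {a : M | ∀ i, δM i a = 0})
    (X : Finset L) :
    ∃ (T : Subalgebra K L) (ψ : T →ₐ[K] L), (∀ x ∈ X, x ∈ T) ∧
      (∀ i (x : T), ∃ h : δL i x ∈ T, ψ ⟨_, h⟩ = δL i (ψ x)) ∧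
      ∀ (p : L[X]) (x : T), p.eval₂ (algebraMap L M) (t x) = 0 → p.eval (ψ x) = 0 := by
  classical
  choose r r' hr hr' hu heq using hfrac
  choose F1 hF1 hF1' using fun b => exists_finset_dotSet (C := C) (L := L) δM (r b) (hr b)
  choose F2 hF2 hF2' using fun b => exists_finset_dotSet (C := C) (L := L) δM (r' b) (hr' b)
  let F : Finset M := X.biUnion (fun b => F1 b ∪ F2 b)
  let D : Subalgebra C M := Algebra.adjoin C (F : Set M)
  have hDfg : D.FG := ⟨F, rfl⟩
  have hD : ∀ d ∈ D, ∀ i, δM i d = 0 := by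
    intro d hd i
    induction hd using Algebra.adjoin_induction with
    | mem x hx =>
      obtain ⟨b, -, hb⟩ := Finset.mem_biUnion.1 (Finset.mem_coe.1 hx)
      rcases Finset.mem_union.1 hb with hb | hb
      · exact hF1 b x hb i
      · exact hF2 b x hb i
    | algebraMap c => rw [IsScalarTower.algebraMap_apply C L M, hδ, hCc, map_zero]
    | add x y _ _ hx hy => rw [map_add, hx, hy, add_zero]
    | mul x y _ _ hx hy => rw [Derivation.leibniz, hx, hy, smul_zero, smul_zero, add_zero]
  have hj := jmap_inj δL δM hδ hC D hD
  have hFD : ∀ b ∈ X, (F1 b : Set M) ⊆ D ∧ (F2 b : Set M) ⊆ D := by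
    intro b hb
    constructor
    · intro x hx
      exact Algebra.subset_adjoin (Finset.mem_coe.2 (Finset.mem_biUnion.2
        ⟨b, hb, Finset.mem_union_left _ hx⟩))
    · intro x hx
      exact Algebra.subset_adjoin (Finset.mem_coe.2 (Finset.mem_biUnion.2
        ⟨b, hb, Finset.mem_union_right _ hx⟩))
  have hx1 : ∀ b ∈ X, ∃ x, jmap C L D x = r b := fun b hb => hF1' b D (hFD b hb).1
  have hx2 : ∀ b ∈ X, ∃ x, jmap C L D x = r' b := fun b hb => hF2' b D (hFD b hb).2
  choose! x1 hx1 using hx1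
  choose! x2 hx2 using hx2
  have hQ : ∏ b ∈ X, x2 b ≠ 0 := by
    intro h
    have h1 := congrArg (jmap C L D) h
    rw [map_prod, map_zero, Finset.prod_eq_zero_iff] at h1
    obtain ⟨b, hb, hb0⟩ := h1
    rw [hx2 b hb] at hb0
    exact (hu b).ne_zero hb0
  obtain ⟨χ, hχ⟩ := exists_chi D hDfg _ hQ
  rw [map_prod, Finset.prod_ne_zero_iff] at hχ
  set j := jmap C L D with hjdef
  set p := pmap (L := L) χ with hpdef
  -- derivation on the tensor product
  have hder : ∀ i, ∃ e : L ⊗[C] D → L ⊗[C] D, (∀ z, j (e z) = δM i (j z)) ∧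
      ∀ z, p (e z) = δL i (p z) := by
    intro i
    have : ∀ z : L ⊗[C] D, ∃ w : L ⊗[C] D, j w = δM i (j z) ∧ p w = δL i (p z) := by
      intro z
      induction z using TensorProduct.induction_on with
      | zero => exact ⟨0, by simp, by simp⟩
      | add a b ha hb =>
        obtain ⟨a', h1, h2⟩ := ha
        obtain ⟨b', h3, h4⟩ := hb
        exact ⟨a' + b', by simp [h1, h3], by simp [h2, h4]⟩
      | tmul l d =>
        refine ⟨δL i l ⊗ₜ d, ?_, ?_⟩
        · rw [hjdef, jmap_tmul, jmap_tmul, Derivation.leibniz, hD d d.2, hδ, smul_zero, zero_add,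
            smul_eq_mul, mul_comm]
        · rw [hpdef, pmap_tmul, pmap_tmul, Derivation.leibniz, hCc, smul_zero, zero_add,
            smul_eq_mul, mul_comm]
    choose e he using this
    exact ⟨e, fun z => (he z).1, fun z => (he z).2⟩
  let Γ : M → L → Prop := fun y l => ∃ b q, p q ≠ 0 ∧ y * j q = j b ∧ l * p q = p b
  have hfun : ∀ y l l', Γ y l → Γ y l' → l = l' := by
    rintro y l l' ⟨b, q, hq, h1, h2⟩ ⟨b', q', hq', h1', h2'⟩
    have h3 : b * q' = b' * q := by
      apply hj
      rw [map_mul, map_mul, ← h1, ← h1']; ring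
    have h4 := congrArg p h3
    rw [map_mul, map_mul, ← h2, ← h2'] at h4
    have h5 : (l - l') * (p q * p q') = 0 := by linear_combination h4
    exact sub_eq_zero.1 ((mul_eq_zero.1 h5).resolve_right (mul_ne_zero hq hq'))
  have hadd : ∀ y l y' l', Γ y l → Γ y' l' → Γ (y + y') (l + l') := by
    rintro y l y' l' ⟨b, q, hq, h1, h2⟩ ⟨b', q', hq', h1', h2'⟩
    refine ⟨b * q' + b' * q, q * q', ?_, ?_, ?_⟩
    · rw [map_mul]; exact mul_ne_zero hq hq'
    · simp only [map_mul, map_add, ← h1, ← h1']; ring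
    · simp only [map_mul, map_add, ← h2, ← h2']; ring
  have hmul : ∀ y l y' l', Γ y l → Γ y' l' → Γ (y * y') (l * l') := by
    rintro y l y' l' ⟨b, q, hq, h1, h2⟩ ⟨b', q', hq', h1', h2'⟩
    refine ⟨b * b', q * q', ?_, ?_, ?_⟩
    · rw [map_mul]; exact mul_ne_zero hq hq'
    · simp only [map_mul, ← h1, ← h1']; ring
    · simp only [map_mul, ← h2, ← h2']; ring
  have halg : ∀ l, Γ (algebraMap L M l) l := by
    intro l
    refine ⟨l ⊗ₜ 1, 1, by simp, ?_, ?_⟩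
    · rw [hjdef, jmap_tmul]; simp
    · rw [hpdef, pmap_tmul]; simp
  have hdiff : ∀ i y l, Γ y l → Γ (δM i y) (δL i l) := by
    rintro i y l ⟨b, q, hq, h1, h2⟩
    obtain ⟨e, he1, he2⟩ := hder i
    refine ⟨e b * q - b * e q, q * q, ?_, ?_, ?_⟩
    · rw [map_mul]; exact mul_ne_zero hq hq
    · have h3 := congrArg (δM i) h1
      rw [Derivation.leibniz, smul_eq_mul, smul_eq_mul] at h3
      simp only [map_mul, map_sub, he1]
      linear_combination (j q) * h3 - δM i (j q) * h1
    · have h3 := congrArg (δL i) h2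
      rw [Derivation.leibniz, smul_eq_mul, smul_eq_mul] at h3
      simp only [map_mul, map_sub, he2]
      linear_combination (p q) * h3 - δL i (p q) * h2
  have hpol : ∀ (f : L[X]) y l, Γ y l → Γ (f.eval₂ (algebraMap L M) y) (f.eval l) := by
    intro f y l h
    induction f using Polynomial.induction_on' with
    | add f g hf hg => rw [eval₂_add, eval_add]; exact hadd _ _ _ _ hf hg
    | monomial n a =>
      rw [eval₂_monomial, eval_monomial]
      refine hmul _ _ _ _ (halg a) ?_
      induction n with
      | zero => simpa using halg 1
      | succ n ih => rw [pow_succ, pow_succ]; exact hmul _ _ _ _ ih h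
  have hone : Γ 1 1 := by simpa using halg 1
  have hzero : Γ 0 0 := by simpa using halg 0
  let T : Subalgebra K L :=
    { carrier := {x | ∃ l, Γ (t x) l}
      mul_mem' := by
        rintro a b ⟨l, hl⟩ ⟨l', hl'⟩
        exact ⟨l * l', by rw [map_mul]; exact hmul _ _ _ _ hl hl'⟩
      add_mem' := by
        rintro a b ⟨l, hl⟩ ⟨l', hl'⟩
        exact ⟨l + l', by rw [map_add]; exact hadd _ _ _ _ hl hl'⟩
      algebraMap_mem' := fun a => ⟨algebraMap K L a, by rw [hst]; exact halg _⟩ }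
  have hT : ∀ x : T, ∃ l, Γ (t x) l := fun x => x.2
  choose ψ hψ using hT
  let Ψ : T →ₐ[K] L :=
    { toFun := ψ
      map_one' := hfun _ _ _ (hψ 1) (by simpa using hone)
      map_zero' := hfun _ _ _ (hψ 0) (by simpa using hzero)
      map_mul' := fun a b => hfun _ _ _ (hψ _) (by
        rw [Subalgebra.coe_mul, map_mul]; exact hmul _ _ _ _ (hψ a) (hψ b))
      map_add' := fun a b => hfun _ _ _ (hψ _) (by
        rw [Subalgebra.coe_add, map_add]; exact hadd _ _ _ _ (hψ a) (hψ b))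
      commutes' := fun a => hfun _ _ _ (hψ _) (by
        rw [Subalgebra.coe_algebraMap, hst]; exact halg _) }
  refine ⟨T, Ψ, ?_, ?_, ?_⟩
  · intro b hb
    refine ⟨p (x1 b) / p (x2 b), x1 b, x2 b, hχ b hb, ?_, ?_⟩
    · rw [hx1 b hb, hx2 b hb, heq]
    · rw [div_mul_cancel₀ _ (hχ b hb)]
  · intro i x
    have h1 := hdiff i _ _ (hψ x)
    rw [ht] at h1
    exact ⟨⟨_, h1⟩, hfun _ _ _ (hψ ⟨_, _, h1⟩) h1⟩
  · intro f x hf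
    have h1 := hpol f _ _ (hψ x)
    rw [hf] at h1
    exact hfun _ _ _ h1 hzero

open Polynomial in
/-- Combination. -/
theorem exists_psi {m : ℕ} (K L : Type u) [Field K] [CharZero K] [Field L] [Algebra K L]
    (δK : Fin m → Derivation ℤ K K) (δL : Fin m → Derivation ℤ L L)
    (hcL : CommutingDerivations δL)
    (hcompat : ∀ i a, δL i (algebraMap K L a) = algebraMap K L (δK i a))
    (halgcl : IsAlgClosed ↥(constantSubfield δK))
    (hnonew : ∀ a : L, (∀ i, δL i a = 0) → a ∈ (algebraMap K L).range)
    (hsn : StronglyNormalCond.{u} K L δK δL)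
    (α : L) (hα : IsIntegral K α) (g : L[X]) (hg : Irreducible g)
    (hgf : g ∣ (minpoly K α).map (algebraMap K L)) (X : Finset L) :
    ∃ (T : Subalgebra K L) (ψ : T →ₐ[K] L) (hαT : α ∈ T), (∀ x ∈ X, x ∈ T) ∧
      (∀ i (x : T), ∃ h : δL i x ∈ T, ψ ⟨_, h⟩ = δL i (ψ x)) ∧
      g.eval (ψ ⟨α, hαT⟩) = 0 := by
  classical
  obtain ⟨M, _, s, t, δM, hc, hs, ht, hst, hgM⟩ :=
    exists_two_embeddings K L δK δL hcL hcompat α hα g hg hgf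
  let _ : Algebra K M := (s.comp (algebraMap K L)).toAlgebra
  have hKM : ∀ a, algebraMap K M a = s (algebraMap K L a) := fun a => rfl
  have : CharZero M := charZero_of_injective_algebraMap (algebraMap K M).injective
  let s' : L →ₐ[K] M := { s with commutes' := fun a => rfl }
  let t' : L →ₐ[K] M := { t with commutes' := fun a => (hst a).symm }
  have hfr := hsn M δM hc (fun i a => by rw [hKM, hs, hcompat]; rfl) s' t'
    (fun i a => (hs i a).symm) (fun i a => (ht i a).symm)
  let _ : Algebra L M := s.toAlgebra
  obtain ⟨C, _, _, ι, hι1, hι2⟩ : ∃ (C : Type u) (_ : Field C) (_ : IsAlgClosed C) (ι : C →+* K),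
      (∀ c i, δK i (ι c) = 0) ∧ ∀ a, (∀ i, δK i a = 0) → ∃ c, ι c = a :=
    ⟨constantSubfield δK, inferInstance, halgcl, (constantSubfield δK).subtype,
      fun c => c.2, fun a ha => ⟨⟨a, ha⟩, rfl⟩⟩
  let _ : Algebra C L := ((algebraMap K L).comp ι).toAlgebra
  let _ : Algebra C M := (s.comp ((algebraMap K L).comp ι)).toAlgebra
  have : IsScalarTower C L M := IsScalarTower.of_algebraMap_eq fun x => rfl
  obtain ⟨T, ψ, h1, h2, h3⟩ := spec (K := K) (C := C) δL δM hs
    (by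
      intro a ha
      obtain ⟨b, rfl⟩ := hnonew a ha
      obtain ⟨c, rfl⟩ := hι2 b (fun i => by
        have := ha i
        rw [hcompat] at this
        exact (map_eq_zero _).1 this)
      exact ⟨c, rfl⟩)
    (by
      intro i c
      change δL i (algebraMap K L (ι c)) = 0
      rw [hcompat, hι1, map_zero]) t (fun a => (hst a).symm) ht hfr (insert α X)
  exact ⟨T, ψ, h1 α (Finset.mem_insert_self _ _), fun x hx => h1 x (Finset.mem_insert_of_mem hx),
    h2, h3 g ⟨α, _⟩ hgM⟩


open Polynomial IntermediateField in
theorem der_aeval {K L : Type*} [Field K] [Field L] [Algebra K L]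
    (dK : Derivation ℤ K K) (dL : Derivation ℤ L L)
    (hcompat : ∀ a, dL (algebraMap K L a) = algebraMap K L (dK a)) (α : L) (p : K[X]) :
    ∃ q : K[X], dL (aeval α p) = aeval α q + aeval α (derivative p) * dL α := by
  induction p using Polynomial.induction_on' with
  | add p q hp hq =>
    obtain ⟨p', hp⟩ := hp
    obtain ⟨q', hq⟩ := hq
    refine ⟨p' + q', ?_⟩
    simp only [map_add, hp, hq]
    ring
  | monomial n a =>
    refine ⟨monomial n (dK a), ?_⟩
    rw [aeval_monomial, aeval_monomial, derivative_monomial, aeval_monomial, Derivation.leibniz,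
      Derivation.leibniz_pow, hcompat]
    simp only [smul_eq_mul, nsmul_eq_mul, map_mul, map_natCast]
    ring

open Polynomial IntermediateField in
theorem der_adjoin {K L : Type*} [Field K] [CharZero K] [Field L] [Algebra K L]
    (dK : Derivation ℤ K K) (dL : Derivation ℤ L L)
    (hcompat : ∀ a, dL (algebraMap K L a) = algebraMap K L (dK a)) (α : L) (hα : IsIntegral K α)
    (x : L) (hx : x ∈ K⟮α⟯) : dL x ∈ K⟮α⟯ := by
  have hmem : ∀ p : K[X], aeval α p ∈ K⟮α⟯ := fun p =>
    algebra_adjoin_le_adjoin K _ (aeval_mem_adjoin_singleton K α)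
  have hsep : (minpoly K α).Separable := (minpoly.irreducible hα).separable
  have h0 : aeval α (derivative (minpoly K α)) ≠ 0 :=
    hsep.aeval_derivative_ne_zero (minpoly.aeval K α)
  have h1 : dL α ∈ K⟮α⟯ := by
    obtain ⟨q, hq⟩ := der_aeval dK dL hcompat α (minpoly K α)
    rw [minpoly.aeval, map_zero] at hq
    have : dL α = - aeval α q / aeval α (derivative (minpoly K α)) := by
      rw [eq_div_iff h0]; linear_combination -hq
    rw [this]
    exact div_mem (neg_mem (hmem _)) (hmem _)
  have : x ∈ K⟮α⟯.toSubalgebra := hx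
  rw [adjoin_simple_toSubalgebra_of_isAlgebraic hα.isAlgebraic,
    Algebra.adjoin_singleton_eq_range_aeval] at this
  obtain ⟨p, rfl⟩ := this
  obtain ⟨q, hq⟩ := der_aeval dK dL hcompat α p
  change dL (aeval α p) ∈ _
  rw [hq]
  exact add_mem (hmem _) (mul_mem (hmem _) h1)

open Polynomial IntermediateField in
theorem exists_coeffs {K L : Type*} [Field K] [Field L] [Algebra K L]
    (α : L) (hα : IsIntegral K α) (x : L) (hx : x ∈ K⟮α⟯) :
    ∃ c : Fin (minpoly K α).natDegree → K, x = ∑ l, algebraMap K L (c l) * α ^ (l : ℕ) := by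
  have : x ∈ K⟮α⟯.toSubalgebra := hx
  rw [adjoin_simple_toSubalgebra_of_isAlgebraic hα.isAlgebraic,
    Algebra.adjoin_singleton_eq_range_aeval] at this
  obtain ⟨p, rfl⟩ := this
  refine ⟨fun l => (p %ₘ minpoly K α).coeff l, ?_⟩
  change aeval α p = _
  have h1 : (p %ₘ minpoly K α).natDegree < (minpoly K α).natDegree :=
    natDegree_modByMonic_lt _ (minpoly.monic hα) (minpoly.ne_one K α)
  rw [← minpoly.aeval_modByMonic_minpoly, aeval_eq_sum_range' h1, ← Fin.sum_univ_eq_sum_range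
    (fun l => (p %ₘ minpoly K α).coeff l • α ^ l)]
  simp only [Algebra.smul_def]

open Polynomial in
theorem splits_of_roots {L : Type*} [Field L] (f : L[X])
    (h : ∀ g, Irreducible g → g ∣ f → ∃ x, g.eval x = 0) : f.Splits := by
  by_cases hf : f = 0
  · rw [hf]; exact Splits.zero
  induction f using WfDvdMonoid.induction_on_irreducible with
  | zero => exact absurd rfl hf
  | unit u hu => exact hu.splits
  | mul a i ha hi ih =>
    refine Splits.mul ?_ (ih (fun g hg hd => h g hg (hd.mul_left _)) ha)
    obtain ⟨x, hx⟩ := h i hi (dvd_mul_right _ _)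
    exact Splits.of_degree_eq_one (degree_eq_one_of_irreducible_of_root hi hx)

open Polynomial in
theorem exists_roots {K L : Type*} [Field K] [CharZero K] [Field L] [Algebra K L]
    (α : L) (hα : IsIntegral K α)
    (h : ∀ g, Irreducible g → g ∣ (minpoly K α).map (algebraMap K L) → ∃ x, g.eval x = 0) :
    ∃ β : Fin (minpoly K α).natDegree → L, Function.Injective β ∧
      (∀ j, ((minpoly K α).map (algebraMap K L)).IsRoot (β j)) ∧ ∃ j, β j = α := by
  classical
  set f := (minpoly K α).map (algebraMap K L) with hf
  have hs : f.Splits := splits_of_roots f h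
  have hsep : f.Separable := ((minpoly.irreducible hα).separable).map
  have hf0 : f ≠ 0 := ((minpoly.monic hα).map _).ne_zero
  have hcard : f.roots.toFinset.card = (minpoly K α).natDegree := by
    rw [Multiset.toFinset_card_of_nodup (nodup_roots hsep), ← hs.natDegree_eq_card_roots, hf,
      natDegree_map]
  let e := (f.roots.toFinset.equivFinOfCardEq hcard).symm
  refine ⟨fun j => e j, Subtype.val_injective.comp e.injective, fun j => ?_, ?_⟩
  · have := (e j).2
    rw [Multiset.mem_toFinset, mem_roots hf0] at this
    exact this
  · have : α ∈ f.roots.toFinset := by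
      rw [Multiset.mem_toFinset, mem_roots hf0, IsRoot.def, hf, eval_map_algebraMap,
        minpoly.aeval]
    exact ⟨e.symm ⟨α, this⟩, by simp⟩


theorem map_der_mul {ι L : Type*} [Fintype ι] [Field L] (d : Derivation ℤ L L)
    (P Q : Matrix ι ι L) :
    (P * Q).map (fun x => d x) = P.map (fun x => d x) * Q + P * Q.map (fun x => d x) := by
  ext a b
  simp only [Matrix.map_apply, Matrix.mul_apply, Matrix.add_apply, map_sum, Derivation.leibniz,
    smul_eq_mul, ← Finset.sum_add_distrib]
  refine Finset.sum_congr rfl fun c _ => ?_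
  ring

theorem isPV_of_fintype {m : ℕ} {ι K L : Type*} [Fintype ι] [DecidableEq ι] [Field K] [Field L]
    [Algebra K L]
    (δK : Fin m → Derivation ℤ K K) (δL : Fin m → Derivation ℤ L L)
    (hcL : CommutingDerivations δL)
    (hcompat : ∀ i a, δL i (algebraMap K L a) = algebraMap K L (δK i a))
    (hnonew : ∀ a : L, (∀ i, δL i a = 0) → a ∈ (algebraMap K L).range)
    (B : Fin m → Matrix ι ι K) (W : Matrix ι ι L) (hW : IsUnit W)
    (hB : ∀ i, W.map (fun x => δL i x) = (B i).map (algebraMap K L) * W)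
    (hgen : IntermediateField.adjoin K {x : L | ∃ p q, W p q = x} = ⊤) :
    IsPicardVessiot K L δK δL := by
  refine ⟨hnonew, ?_⟩
  have hint : ∀ i j, (B j).map (fun x => δK i x) - (B i).map (fun x => δK j x)
      = B i * B j - B j * B i := by
    intro i j
    have hinj : Function.Injective (fun P : Matrix ι ι K => P.map (algebraMap K L)) :=
      Matrix.map_injective (algebraMap K L).injective
    have key : ∀ i j, (W.map (fun x => δL j x)).map (fun x => δL i x) =
        (((B j).map (fun x => δK i x)).map (algebraMap K L)
          + (B j).map (algebraMap K L) * (B i).map (algebraMap K L)) * W := by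
      intro i j
      rw [hB, map_der_mul, hB, add_mul, Matrix.mul_assoc]
      congr 2
      ext a b
      simp [hcompat]
    have hc : (W.map (fun x => δL j x)).map (fun x => δL i x) =
        (W.map (fun x => δL i x)).map (fun x => δL j x) := by
      ext a b
      simp [hcL i j]
    rw [key, key] at hc
    have h2 := hW.mul_left_injective hc
    apply hinj
    simp only [Matrix.map_sub _ (map_sub (algebraMap K L)), Matrix.map_mul]
    rw [sub_eq_sub_iff_add_eq_add, h2, add_comm]
  let e := Fintype.equivFin ι
  have hu : IsUnit (Matrix.reindex e e W) := by
    rw [Matrix.isUnit_iff_isUnit_det, Matrix.det_reindex_self, ← Matrix.isUnit_iff_isUnit_det]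
    exact hW
  refine ⟨Fintype.card ι, fun i => Matrix.reindex e e (B i), hu.unit, ?_, ?_, ?_⟩
  · intro i j
    have := congrArg (Matrix.reindex e e) (hint i j)
    simp only [Matrix.reindex_apply, Matrix.submatrix_sub, Pi.sub_apply, Matrix.submatrix_map,
      ← Matrix.submatrix_mul_equiv _ _ _ e.symm _] at this ⊢
    exact this
  · intro i
    rw [IsUnit.unit_spec]
    have := congrArg (Matrix.reindex e e) (hB i)
    simp only [Matrix.reindex_apply, Matrix.submatrix_map,
      ← Matrix.submatrix_mul_equiv _ _ _ e.symm _] at this ⊢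
    exact this
  · rw [eq_top_iff, ← hgen]
    apply IntermediateField.adjoin.mono
    rintro x ⟨p, q, rfl⟩
    exact ⟨e p, e q, by simp⟩

theorem exists_B {m : ℕ} {K L : Type*} [Field K] [CharZero K] [Field L] [Algebra K L]
    (δK : Fin m → Derivation ℤ K K) (δL : Fin m → Derivation ℤ L L)
    (hcompat : ∀ i a, δL i (algebraMap K L a) = algebraMap K L (δK i a))
    (α : L) (hα : IsIntegral K α) (n : ℕ) (A : Fin m → Matrix (Fin n) (Fin n) L)
    (hA : ∀ i p q, A i p q ∈ IntermediateField.adjoin K {α})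
    (Y : Matrix (Fin n) (Fin n) L)
    (hY : ∀ i, Y.map (fun x => δL i x) = A i * Y) (i : Fin m)
    (s : Fin n × Fin (minpoly K α).natDegree) :
    ∃ b : Fin n × Fin (minpoly K α).natDegree → K, ∀ q, δL i (α ^ (s.2 : ℕ) * Y s.1 q) =
      ∑ r, algebraMap K L (b r) * (α ^ (r.2 : ℕ) * Y r.1 q) := by
  obtain ⟨p, k⟩ := s
  have hαm : α ∈ IntermediateField.adjoin K {α} := IntermediateField.mem_adjoin_simple_self K α
  have h1 : ∀ r, (if p = r then δL i (α ^ (k : ℕ)) else 0) + α ^ (k : ℕ) * A i p r ∈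
      IntermediateField.adjoin K {α} := by
    intro r
    refine add_mem ?_ (mul_mem (pow_mem hαm _) (hA _ _ _))
    split_ifs
    · exact der_adjoin (δK i) (δL i) (hcompat i) α hα _ (pow_mem hαm _)
    · exact zero_mem _
  choose c hc using fun r => exists_coeffs α hα _ (h1 r)
  refine ⟨fun r => c r.1 r.2, fun q => ?_⟩
  rw [Fintype.sum_prod_type]
  have h2 : ∀ r, ∑ l, algebraMap K L (c r l) * (α ^ (l : ℕ) * Y r q) =
      ((if p = r then δL i (α ^ (k : ℕ)) else 0) + α ^ (k : ℕ) * A i p r) * Y r q := by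
    intro r
    rw [hc r, Finset.sum_mul]
    exact Finset.sum_congr rfl fun l _ => by ring
  simp only [h2, add_mul, Finset.sum_add_distrib, ite_mul, zero_mul, Finset.sum_ite_eq,
    Finset.mem_univ, if_true]
  have h3 := congrFun (congrFun (hY i) p) q
  rw [Matrix.map_apply, Matrix.mul_apply] at h3
  rw [Derivation.leibniz, h3, smul_eq_mul, smul_eq_mul, Finset.mul_sum, add_comm, mul_comm (Y p q)]
  congr 1
  exact Finset.sum_congr rfl fun l _ => by ring

open Polynomial in
theorem core {m : ℕ} {K L : Type*} [Field K] [CharZero K] [Field L] [Algebra K L]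
    (δK : Fin m → Derivation ℤ K K) (δL : Fin m → Derivation ℤ L L)
    (hcL : CommutingDerivations δL)
    (hcompat : ∀ i a, δL i (algebraMap K L a) = algebraMap K L (δK i a))
    (hnonew : ∀ a : L, (∀ i, δL i a = 0) → a ∈ (algebraMap K L).range)
    (α : L) (hα : IsIntegral K α)
    (H : ∀ g : L[X], Irreducible g → g ∣ (minpoly K α).map (algebraMap K L) → ∀ X : Finset L,
      ∃ (T : Subalgebra K L) (ψ : T →ₐ[K] L) (hαT : α ∈ T), (∀ x ∈ X, x ∈ T) ∧
      (∀ i (x : T), ∃ h : δL i x ∈ T, ψ ⟨_, h⟩ = δL i (ψ x)) ∧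
      g.eval (ψ ⟨α, hαT⟩) = 0)
    (n : ℕ) (hn : 0 < n) (A : Fin m → Matrix (Fin n) (Fin n) L)
    (hA : ∀ i p q, A i p q ∈ IntermediateField.adjoin K {α})
    (Y Y' : Matrix (Fin n) (Fin n) L) (hYY : Y * Y' = 1)
    (hY : ∀ i, Y.map (fun x => δL i x) = A i * Y)
    (hgen : IntermediateField.adjoin K ({α} ∪ {x : L | ∃ p q, Y p q = x}) = ⊤) :
    IsPicardVessiot K L δK δL := by
  classical
  obtain ⟨β, hβi, hβr, j₀, hj₀⟩ := exists_roots α hα (fun g hg hgf => by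
    obtain ⟨T, ψ, h, -, -, h'⟩ := H g hg hgf ∅
    exact ⟨_, h'⟩)
  choose B hB using exists_B δK δL hcompat α hα n A hA Y hY
  have H2 : ∀ j, ∃ (T : Subalgebra K L) (ψ : T →ₐ[K] L) (hαT : α ∈ T) (_ : ∀ p q, Y p q ∈ T)
      (_ : ∀ p q, Y' p q ∈ T),
      (∀ i (x : T), ∃ h : δL i x ∈ T, ψ ⟨_, h⟩ = δL i (ψ x)) ∧
      ψ ⟨α, hαT⟩ = β j ∧ (j = j₀ → ∀ x : T, ψ x = x) := by
    intro j
    by_cases hj : j = j₀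
    · refine ⟨⊤, (⊤ : Subalgebra K L).val, Algebra.mem_top, fun _ _ => Algebra.mem_top,
        fun _ _ => Algebra.mem_top, fun i x => ⟨Algebra.mem_top, rfl⟩, ?_, fun _ _ => rfl⟩
      rw [hj, hj₀]; rfl
    · obtain ⟨T, ψ, h, hX, h1, h2⟩ := H (X - C (β j)) (irreducible_X_sub_C _)
        (dvd_iff_isRoot.2 (hβr j))
        (Finset.univ.image (fun x : Fin n × Fin n => Y x.1 x.2) ∪
          Finset.univ.image (fun x : Fin n × Fin n => Y' x.1 x.2))
      refine ⟨T, ψ, h, fun p q => hX _ ?_, fun p q => hX _ ?_, h1, ?_, fun h => absurd h hj⟩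
      · exact Finset.mem_union_left _ (Finset.mem_image.2 ⟨(p, q), Finset.mem_univ _, rfl⟩)
      · exact Finset.mem_union_right _ (Finset.mem_image.2 ⟨(p, q), Finset.mem_univ _, rfl⟩)
      · rw [eval_sub, eval_X, eval_C, sub_eq_zero] at h2
        exact h2
  choose T ψ hαT hYT hYT' hder hψα hψ0 using H2
  let a : ∀ j, T j := fun j => ⟨α, hαT j⟩
  let y : ∀ j, Matrix (Fin n) (Fin n) (T j) := fun j => Matrix.of fun p q => ⟨Y p q, hYT j p q⟩
  let y' : ∀ j, Matrix (Fin n) (Fin n) (T j) := fun j => Matrix.of fun p q => ⟨Y' p q, hYT' j p q⟩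
  let Z : ∀ _ : Fin (minpoly K α).natDegree, Matrix (Fin n) (Fin n) L :=
    fun j => (y j).map (ψ j)
  have hZ : ∀ j, IsUnit (Z j) := by
    intro j
    have h1 : y j * y' j = 1 := by
      have hinj : Function.Injective (fun P : Matrix (Fin n) (Fin n) (T j) => P.map (T j).val) :=
        Matrix.map_injective Subtype.val_injective
      apply hinj
      simp only [Matrix.map_mul]
      rw [Matrix.map_one _ (map_zero _) (map_one _)]
      exact hYY
    have h2 : Z j * (y' j).map (ψ j) = 1 := by
      have h3 := congrArg (fun P => P.map (ψ j)) h1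
      simp only [Matrix.map_mul] at h3
      rw [Matrix.map_one _ (map_zero _) (map_one _)] at h3
      exact h3
    exact IsUnit.of_mul_eq_one _ h2
  let W : Matrix (Fin n × Fin (minpoly K α).natDegree) (Fin n × Fin (minpoly K α).natDegree) L :=
    Matrix.of fun s c => β c.2 ^ (s.2 : ℕ) * Z c.2 s.1 c.1
  have hWψ : ∀ s c, W s c = ψ c.2 (a c.2 ^ (s.2 : ℕ) * y c.2 s.1 c.1) := by
    intro s c
    rw [map_mul, map_pow, hψα]
    rfl
  have hW : IsUnit W := by
    have h1 : W = Matrix.kroneckerMap (· * ·) (1 : Matrix (Fin n) (Fin n) L)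
        (Matrix.vandermonde β).transpose * Matrix.blockDiagonal Z := by
      ext ⟨p, k⟩ ⟨q, j⟩
      rw [Matrix.mul_apply, Fintype.sum_prod_type]
      simp [W, Matrix.blockDiagonal_apply, Matrix.one_apply, Matrix.vandermonde_apply]
    rw [Matrix.isUnit_iff_isUnit_det, h1, Matrix.det_mul, Matrix.det_kronecker,
      Matrix.det_blockDiagonal, isUnit_iff_ne_zero]
    refine mul_ne_zero (mul_ne_zero (by simp) (pow_ne_zero _ ?_)) ?_
    · rw [Matrix.det_transpose]
      exact Matrix.det_vandermonde_ne_zero_iff.2 hβi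
    · rw [Finset.prod_ne_zero_iff]
      intro j _
      exact ((Matrix.isUnit_iff_isUnit_det _).1 (hZ j)).ne_zero
  refine isPV_of_fintype δK δL hcL hcompat hnonew (fun i => Matrix.of (B i)) W hW ?_ ?_
  · intro i
    ext s ⟨q, j⟩
    rw [Matrix.map_apply, Matrix.mul_apply, hWψ]
    obtain ⟨h, h'⟩ := hder j i (a j ^ (s.2 : ℕ) * y j s.1 q)
    rw [← h']
    have h4 : (⟨_, h⟩ : T j) =
        ∑ r, algebraMap K (T j) (B i s r) * (a j ^ (r.2 : ℕ) * y j r.1 q) := by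
      apply Subtype.ext
      change δL i (α ^ (s.2 : ℕ) * Y s.1 q) = _
      rw [hB]
      simp only [AddSubmonoidClass.coe_finsetSum]
      rfl
    rw [h4, map_sum]
    refine Finset.sum_congr rfl fun r _ => ?_
    rw [hWψ, map_mul, AlgHom.commutes]
    rfl
  · rw [eq_top_iff, ← hgen, IntermediateField.adjoin_le_iff]
    set N := IntermediateField.adjoin K {x : L | ∃ p q, W p q = x} with hN
    have hd : 0 < (minpoly K α).natDegree := minpoly.natDegree_pos hα
    have hmem : ∀ p (k : Fin (minpoly K α).natDegree) q, α ^ (k : ℕ) * Y p q ∈ N := by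
      intro p k q
      apply IntermediateField.subset_adjoin
      refine ⟨(p, k), (q, j₀), ?_⟩
      rw [hWψ, hψ0 _ rfl]
      rfl
    have hYN : ∀ p q, Y p q ∈ N := by
      intro p q
      simpa using hmem p ⟨0, hd⟩ q
    rintro x (hx | ⟨p, q, rfl⟩)
    · rw [Set.mem_singleton_iff] at hx
      subst hx
      by_cases h1 : (minpoly K x).natDegree = 1
      · obtain ⟨b, hb⟩ := minpoly.mem_range_of_degree_eq_one K x
          ((degree_eq_iff_natDegree_eq_of_pos one_pos).2 h1)
        rw [← hb]
        exact N.algebraMap_mem b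
      · obtain ⟨q, hq⟩ : ∃ q, Y ⟨0, hn⟩ q ≠ 0 := by
          by_contra hcon
          push Not at hcon
          have := congrFun (congrFun hYY ⟨0, hn⟩) ⟨0, hn⟩
          rw [Matrix.mul_apply, Matrix.one_apply_eq] at this
          simp [hcon] at this
        have h2 := hmem ⟨0, hn⟩ ⟨1, by omega⟩ q
        simp only [pow_one] at h2
        have h3 := div_mem h2 (hYN ⟨0, hn⟩ q)
        rwa [mul_div_cancel_right₀ _ hq] at h3
    · exact hYN p q


theorem exists_prim {K L : Type*} [Field K] [CharZero K] [Field L] [Algebra K L] (F : Finset L)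
    (hF : ∀ x ∈ F, IsIntegral K x) :
    ∃ α : L, IsIntegral K α ∧ ∀ x ∈ F, x ∈ IntermediateField.adjoin K {α} := by
  have hfd : FiniteDimensional K (IntermediateField.adjoin K (F : Set L)) :=
    IntermediateField.finiteDimensional_adjoin (fun x hx => hF x hx)
  obtain ⟨α, hα⟩ := Field.exists_primitive_element K (IntermediateField.adjoin K (F : Set L))
  refine ⟨α, ?_, fun x hx => ?_⟩
  · exact (Algebra.IsIntegral.isIntegral (R := K) α).map
      (IntermediateField.val (IntermediateField.adjoin K (F : Set L)))
  · have h1 : (⟨x, IntermediateField.subset_adjoin K _ hx⟩ :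
        IntermediateField.adjoin K (F : Set L)) ∈ IntermediateField.adjoin K {α} := by
      rw [hα]; trivial
    have h2 := (IntermediateField.mem_map (f := IntermediateField.val _) _).2 ⟨_, h1, rfl⟩
    rw [IntermediateField.adjoin_map, Set.image_singleton] at h2
    exact h2

theorem der_stable {K L : Type*} [Field K] [Field L] [Algebra K L]
    (dK : Derivation ℤ K K) (dL : Derivation ℤ L L)
    (hcompat : ∀ a, dL (algebraMap K L a) = algebraMap K L (dK a)) (S : Set L)
    (hS : ∀ x ∈ S, dL x ∈ IntermediateField.adjoin K S) (x : L)
    (hx : x ∈ IntermediateField.adjoin K S) : dL x ∈ IntermediateField.adjoin K S := by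
  induction hx using IntermediateField.adjoin_induction with
  | mem x hx => exact hS x hx
  | algebraMap a => rw [hcompat]; exact IntermediateField.algebraMap_mem _ _
  | add x y _ _ hx hy => rw [map_add]; exact add_mem hx hy
  | mul x y hx' hy' hx hy =>
    rw [Derivation.leibniz]; exact add_mem (mul_mem hx' hy) (mul_mem hy' hx)
  | inv x hx' hx =>
    rw [Derivation.leibniz_inv]
    exact mul_mem (neg_mem (pow_mem (inv_mem hx') _)) hx

end PVaux

set_option synthInstance.maxHeartbeats 400000 in
/-- Let `K` be a `Δ`-field with algebraically closed constant field, and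
`L|K` a strongly normal extension. If `L|K°` is Picard-Vessiot, where `K°` is the relative
algebraic closure of `K` in `L` (an intermediate `Δ`-field), then `L|K` is Picard-Vessiot. -/
theorem isPicardVessiot_of_stronglyNormal_of_relAlgClosure {m : ℕ}
    (K L : Type u) [Field K] [CharZero K] [Field L] [CharZero L] [Algebra K L]
    (δK : Fin m → Derivation ℤ K K) (δL : Fin m → Derivation ℤ L L)
    (hcK : CommutingDerivations δK) (hcL : CommutingDerivations δL)
    (hcompat : ∀ i a, δL i (algebraMap K L a) = algebraMap K L (δK i a))
    (halgcl : IsAlgClosed ↥(constantSubfield δK))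
    -- `L|K` is strongly normal:
    (hfg : FinitelyDeltaGenerated K L δL)
    (hnonew : ∀ a : L, (∀ i, δL i a = 0) → a ∈ (algebraMap K L).range)
    (hsn : StronglyNormalCond.{u} K L δK δL)
    -- `K°`, the relative algebraic closure of `K` in `L`, with its induced `Δ`-structure:
    (K₀ : IntermediateField K L) (hK₀ : ∀ x : L, x ∈ K₀ ↔ IsAlgebraic K x)
    (δK₀ : Fin m → Derivation ℤ ↥K₀ ↥K₀)
    (hδK₀ : ∀ i (x : ↥K₀), (δK₀ i x : L) = δL i (x : L))
    -- `L|K°` is Picard-Vessiot: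
    (hPV : IsPicardVessiot ↥K₀ L δK₀ δL) :
    IsPicardVessiot K L δK δL := by
  classical
  obtain ⟨n, hn, A, Y, hY, hgen⟩ : ∃ (n : ℕ) (_ : 0 < n) (A : Fin m → Matrix (Fin n) (Fin n) K₀)
      (Y : GL (Fin n) L), (∀ i, ((Y : Matrix (Fin n) (Fin n) L)).map (fun x => δL i x)
        = (A i).map (algebraMap K₀ L) * (Y : Matrix (Fin n) (Fin n) L)) ∧
      IntermediateField.adjoin K₀ {x : L | ∃ p q, (Y : Matrix (Fin n) (Fin n) L) p q = x} = ⊤ := by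
    obtain ⟨-, n, A, Y, -, hY, hgen⟩ := hPV
    rcases Nat.eq_zero_or_pos n with rfl | hn
    · refine ⟨1, one_pos, 0, 1, fun i => ?_, ?_⟩
      · ext p q
        have hpq : p = q := Subsingleton.elim _ _
        subst hpq
        simp
      · rw [eq_top_iff, ← hgen]
        apply IntermediateField.adjoin.mono
        rintro x ⟨p, -⟩
        exact p.elim0
    · exact ⟨n, hn, A, Y, hY, hgen⟩
  set E : Set L := {x : L | ∃ p q, (Y : Matrix (Fin n) (Fin n) L) p q = x} with hE
  have hgen' : IntermediateField.adjoin K ((K₀ : Set L) ∪ E) = ⊤ := by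
    rw [← IntermediateField.restrictScalars_adjoin, hgen]
    rfl
  obtain ⟨S, hS⟩ := hfg
  have hfin : ∀ s : L, ∃ F : Finset L, (F : Set L) ⊆ (K₀ : Set L) ∪ E ∧
      s ∈ IntermediateField.adjoin K (F : Set L) := fun s =>
    IntermediateField.exists_finset_of_mem_adjoin (by rw [hgen']; trivial)
  choose G hG hG' using hfin
  let F1 : Finset L := (S.biUnion G).filter (fun x => x ∈ K₀)
  let F2 : Finset L := Finset.univ.image
    (fun x : Fin m × Fin n × Fin n => (A x.1 x.2.1 x.2.2 : L))
  obtain ⟨α, hα, hF⟩ := PVaux.exists_prim (K := K) (F1 ∪ F2) (by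
    intro x hx
    refine ((hK₀ x).1 ?_).isIntegral
    rcases Finset.mem_union.1 hx with hx | hx
    · exact (Finset.mem_filter.1 hx).2
    · obtain ⟨y, -, rfl⟩ := Finset.mem_image.1 hx
      exact SetLike.coe_mem _)
  have hA : ∀ i p q, ((A i).map (algebraMap K₀ L)) p q ∈ IntermediateField.adjoin K {α} := by
    intro i p q
    exact hF _ (Finset.mem_union_right _ (Finset.mem_image.2 ⟨(i, p, q), Finset.mem_univ _, rfl⟩))
  set N := IntermediateField.adjoin K ({α} ∪ E) with hN
  have hαN : IntermediateField.adjoin K {α} ≤ N :=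
    IntermediateField.adjoin.mono _ _ _ Set.subset_union_left
  have hEN : ∀ p q, (Y : Matrix (Fin n) (Fin n) L) p q ∈ N := fun p q =>
    IntermediateField.subset_adjoin K _ (Or.inr ⟨p, q, rfl⟩)
  have hstab : ∀ i, ∀ x ∈ N, δL i x ∈ N := by
    intro i
    refine PVaux.der_stable (δK i) (δL i) (hcompat i) _ ?_
    rintro x (hx | ⟨p, q, rfl⟩)
    · rw [Set.mem_singleton_iff] at hx
      subst hx
      exact hαN (PVaux.der_adjoin (δK i) (δL i) (hcompat i) x hα x
        (IntermediateField.mem_adjoin_simple_self K x))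
    · have h3 := congrFun (congrFun (hY i) p) q
      rw [Matrix.map_apply, Matrix.mul_apply] at h3
      rw [h3]
      exact sum_mem fun r _ => mul_mem (hαN (hA i p r)) (hEN r q)
  have hSN : ∀ s ∈ S, s ∈ N := by
    intro s hs
    have : IntermediateField.adjoin K (G s : Set L) ≤ N := by
      rw [IntermediateField.adjoin_le_iff]
      intro x hx
      rcases hG s hx with h | ⟨p, q, rfl⟩
      · exact hαN (hF x (Finset.mem_union_left _ (Finset.mem_filter.2
          ⟨Finset.mem_biUnion.2 ⟨s, hs, hx⟩, h⟩)))
      · exact hEN p q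
    exact this (hG' s)
  have hNtop : N = ⊤ := by
    rw [eq_top_iff, ← hS, IntermediateField.adjoin_le_iff]
    rintro x ⟨a, ha, w, rfl⟩
    induction w with
    | nil => exact hSN a ha
    | cons i w ih => exact hstab i _ ih
  refine PVaux.core δK δL hcL hcompat hnonew α hα ?_ n hn
    (fun i => (A i).map (algebraMap K₀ L)) hA (Y : Matrix (Fin n) (Fin n) L)
    ((Y⁻¹ : GL (Fin n) L) : Matrix (Fin n) (Fin n) L) (Units.mul_inv Y) hY hNtop
  intro g hg hgf X
  exact PVaux.exists_psi K L δK δL hcL hcompat halgcl hnonew hsn α hα g hg hgf X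
end

section
/- Let L|K be an extension of fields of characteristic zero such that K is relatively algebraically closed in L (every element of L algebraic over K lies in K). Then every invertible element u of L ⊗_K L is of the form u = a ⊗ b for some nonzero a, b ∈ L. -/
open scoped TensorProduct

section Aux

theorem aux_repr_map {K A B M ι : Type*} [Field K] [CommRing A] [Algebra K A]
    [CommRing B] [Algebra K B] [CommRing M] [Algebra K M] (φ : A →ₐ[K] B)
    (e : Module.Basis ι K M) (x : A ⊗[K] M) (i : ι) :
    (Algebra.TensorProduct.basis B e).repr
        (Algebra.TensorProduct.map φ (AlgHom.id K M) x) i =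
      φ ((Algebra.TensorProduct.basis A e).repr x i) := by
  induction x with
  | zero => simp
  | add x y hx hy => simp [hx, hy]
  | tmul a m =>
    simp [Algebra.TensorProduct.basis_repr_tmul, Algebra.smul_def]

theorem aux_map_injective {K A B M : Type*} [Field K] [CommRing A] [Algebra K A]
    [CommRing B] [Algebra K B] [CommRing M] [Algebra K M] (φ : A →ₐ[K] B)
    (hφ : Function.Injective φ) :
    Function.Injective (Algebra.TensorProduct.map φ (AlgHom.id K M)) := by
  intro x y h
  let e := Module.Basis.ofVectorSpace K M
  apply (Algebra.TensorProduct.basis A e).repr.injective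
  ext i
  apply hφ
  rw [← aux_repr_map, ← aux_repr_map, h]

/-- lifting elements with coordinates in the subalgebra -/
theorem aux_exists_lift {K A B M ι : Type*} [Field K] [CommRing A] [Algebra K A]
    [CommRing B] [Algebra K B] [CommRing M] [Algebra K M] (φ : A →ₐ[K] B)
    (e : Module.Basis ι K M) (x : B ⊗[K] M)
    (h : ∀ i, ∃ a : A, φ a = (Algebra.TensorProduct.basis B e).repr x i) :
    ∃ y : A ⊗[K] M, Algebra.TensorProduct.map φ (AlgHom.id K M) y = x := by
  choose d hd using h
  refine ⟨∑ i ∈ ((Algebra.TensorProduct.basis B e).repr x).support, d i ⊗ₜ e i, ?_⟩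
  conv_rhs => rw [← (Algebra.TensorProduct.basis B e).linearCombination_repr x]
  rw [Finsupp.linearCombination_apply, Finsupp.sum, map_sum]
  refine Finset.sum_congr rfl fun i _ => ?_
  rw [Algebra.TensorProduct.basis_repr_symm_apply', Algebra.TensorProduct.map_tmul, hd]
  simp

theorem aux_finite {K L M : Type*} [Field K] [CharZero K] [Field L] [Algebra K L]
    (hrac : ∀ x : L, IsAlgebraic K x → x ∈ (algebraMap K L).range)
    [Field M] [Algebra K M] [FiniteDimensional K M] : IsDomain (M ⊗[K] L) := by
  let E := AlgebraicClosure L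
  let f : M →ₐ[K] E := IsAlgClosed.lift
  let F : M ⊗[K] L →ₐ[K] E := Algebra.TensorProduct.productMap f (IsScalarTower.toAlgHom K L E)
  have hF : Function.Injective F := by
    rw [injective_iff_map_eq_zero]
    intro x hx
    let pb := Field.powerBasisOfFiniteOfSeparable K M
    obtain ⟨b, rfl⟩ := TensorProduct.eq_repr_basis_left pb.basis x
    let α := f pb.gen
    have hα : IsIntegral K α := (Algebra.IsIntegral.isIntegral pb.gen).map f
    have hmin : minpoly K α = minpoly K pb.gen := minpoly.algHom_eq f f.injective _
    have hdeg : pb.dim ≤ (minpoly L α).natDegree := by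
      rw [← pb.natDegree_minpoly, ← hmin]
      have hl : minpoly L α ∈ Polynomial.lifts (algebraMap K L) := by
        rw [Polynomial.lifts_iff_coeff_lifts]
        intro n
        exact hrac _ (Polynomial.isIntegral_coeff_of_dvd (minpoly K α) (minpoly L α)
          (minpoly.monic hα) (minpoly.monic hα.tower_top)
          (minpoly.dvd_map_of_isScalarTower K L α) n).isAlgebraic
      obtain ⟨q, hq⟩ := (Polynomial.mem_lifts _).1 hl
      have h1 : minpoly K α ∣ q := by
        apply minpoly.dvd
        rw [← Polynomial.aeval_map_algebraMap L, hq, minpoly.aeval]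
      have hq0 : q ≠ 0 := by
        rintro rfl
        exact minpoly.ne_zero hα.tower_top (by rw [← hq, Polynomial.map_zero])
      rw [← hq, Polynomial.natDegree_map]
      exact Polynomial.natDegree_le_of_dvd h1 hq0
    have hli : LinearIndependent L (fun i : Fin pb.dim => α ^ (i : ℕ)) :=
      (linearIndependent_pow (K := L) α).comp (Fin.castLE hdeg) (Fin.castLE_injective hdeg)
    have hb : b = 0 := by
      refine (linearIndependent_iff.1 hli) b ?_
      rw [← hx, Finsupp.linearCombination_apply, Finsupp.sum, Finsupp.sum, map_sum]
      refine Finset.sum_congr rfl fun i _ => ?_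
      simp [F, α, Algebra.smul_def, mul_comm]
    simp [hb]
  exact hF.isDomain F.toRingHom

theorem aux_domain {K L κ : Type*} [Field K] [CharZero K] [Field L] [Algebra K L]
    (hrac : ∀ x : L, IsAlgebraic K x → x ∈ (algebraMap K L).range)
    [Field κ] [Algebra K κ] (x y : κ ⊗[K] L) (hx : x ≠ 0) (hy : y ≠ 0) : x * y ≠ 0 := by
  intro hxy
  let e := Module.Basis.ofVectorSpace K L
  let B := Algebra.TensorProduct.basis κ e
  obtain ⟨i, hi⟩ : ∃ i, B.repr x i ≠ 0 := by
    by_contra! h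
    exact hx (B.repr.map_eq_zero_iff.1 (Finsupp.ext h))
  obtain ⟨j, hj⟩ : ∃ j, B.repr y j ≠ 0 := by
    by_contra! h
    exact hy (B.repr.map_eq_zero_iff.1 (Finsupp.ext h))
  let S : Set κ := (Set.range (B.repr x) ∪ Set.range (B.repr y)) ∪
    {(B.repr x i)⁻¹, (B.repr y j)⁻¹}
  have hS : S.Finite := by
    refine Set.Finite.union (Set.Finite.union ?_ ?_) (Set.toFinite _)
    · exact Finsupp.finite_range _
    · exact Finsupp.finite_range _
  let A := Algebra.adjoin K S
  have hA : Algebra.FiniteType K A :=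
    (Subalgebra.fg_iff_finiteType _).1 (Subalgebra.fg_def.2 ⟨S, hS, rfl⟩)
  obtain ⟨x', hx'⟩ := aux_exists_lift A.val e x
    (fun k => ⟨⟨B.repr x k, Algebra.subset_adjoin (Or.inl (Or.inl ⟨k, rfl⟩))⟩, rfl⟩)
  obtain ⟨y', hy'⟩ := aux_exists_lift A.val e y
    (fun k => ⟨⟨B.repr y k, Algebra.subset_adjoin (Or.inl (Or.inr ⟨k, rfl⟩))⟩, rfl⟩)
  have h0 : x' * y' = 0 := by
    apply aux_map_injective A.val Subtype.val_injective
    rw [map_mul, hx', hy', hxy, map_zero]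
  obtain ⟨m, hm⟩ := Ideal.exists_maximal A
  letI := Ideal.Quotient.field m
  haveI : Algebra.FiniteType K (A ⧸ m) :=
    Algebra.FiniteType.of_surjective (Ideal.Quotient.mkₐ K m) (Ideal.Quotient.mkₐ_surjective K m)
  haveI : FiniteDimensional K (A ⧸ m) := finite_of_finite_type_of_isJacobsonRing K (A ⧸ m)
  haveI := aux_finite hrac (M := A ⧸ m)
  let ρ := Algebra.TensorProduct.map (Ideal.Quotient.mkₐ K m) (AlgHom.id K L)
  have h1 : ρ x' * ρ y' = 0 := by rw [← map_mul, h0, map_zero]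
  have key : ∀ (z : κ ⊗[K] L) (z' : A ⊗[K] L) (k),
      Algebra.TensorProduct.map A.val (AlgHom.id K L) z' = z → B.repr z k ≠ 0 →
      (B.repr z k)⁻¹ ∈ A → ρ z' ≠ 0 := by
    intro z z' k hz hk hinv h
    have h2 := aux_repr_map (Ideal.Quotient.mkₐ K m) e z' k
    have h3 := aux_repr_map A.val e z' k
    change ((Algebra.TensorProduct.basis _ e).repr (ρ z')) k = _ at h2
    rw [h, map_zero, Finsupp.zero_apply] at h2
    rw [hz] at h3
    have hu : IsUnit ((Algebra.TensorProduct.basis A e).repr z' k) := by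
      refine IsUnit.of_mul_eq_one ⟨(B.repr z k)⁻¹, hinv⟩ (Subtype.ext ?_)
      change A.val _ * _ = 1
      rw [← h3]
      exact mul_inv_cancel₀ hk
    exact (hu.map (Ideal.Quotient.mkₐ K m)).ne_zero h2.symm
  rcases mul_eq_zero.1 h1 with h | h
  · exact key x x' i hx' hi (Algebra.subset_adjoin (Or.inr (Or.inl rfl))) h
  · exact key y y' j hy' hj (Algebra.subset_adjoin (Or.inr (Or.inr rfl))) h

theorem aux_scale {K L M V : Type*} [Field K] [Field L] [Algebra K L] [Field M] [Algebra K M]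
    [CommRing V] [IsDomain V] [ValuationRing V] [Algebra K V] [Algebra V L] [IsScalarTower K V L]
    [IsFractionRing V L] (u : L ⊗[K] M) (hu : u ≠ 0) :
    ∃ (a : L) (u' : V ⊗[K] M), a ≠ 0 ∧
      u = (a ⊗ₜ 1) * Algebra.TensorProduct.map (IsScalarTower.toAlgHom K V L) (AlgHom.id K M) u' ∧
      Algebra.TensorProduct.map (IsScalarTower.toAlgHom K V (IsLocalRing.ResidueField V))
        (AlgHom.id K M) u' ≠ 0 := by
  let e := Module.Basis.ofVectorSpace K M
  let B := Algebra.TensorProduct.basis L e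
  let v := ValuationRing.valuation V L
  have hne : (B.repr u).support.Nonempty := by
    rw [Finsupp.support_nonempty_iff]
    exact fun h => hu (B.repr.map_eq_zero_iff.1 h)
  obtain ⟨i, hi, hmax⟩ := Finset.exists_max_image (B.repr u).support (fun i => v (B.repr u i)) hne
  have ha : B.repr u i ≠ 0 := Finsupp.mem_support_iff.1 hi
  set a := B.repr u i with hadef
  have hcoord : ∀ k, B.repr ((a⁻¹ ⊗ₜ 1) * u) k = a⁻¹ * B.repr u k := by
    intro k
    have : ((a⁻¹ ⊗ₜ 1 : L ⊗[K] M)) * u = a⁻¹ • u := by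
      rw [Algebra.smul_def]; rfl
    rw [this]; simp
  obtain ⟨u', hu'⟩ := aux_exists_lift (IsScalarTower.toAlgHom K V L) e ((a⁻¹ ⊗ₜ 1) * u) (by
    intro k
    change ∃ c, algebraMap V L c = B.repr _ k
    rw [hcoord, ← ValuationRing.mem_integer_iff, Valuation.mem_integer_iff, map_mul, map_inv₀]
    by_cases hk : k ∈ (B.repr u).support
    · exact (inv_mul_le_one₀ (by
        rw [zero_lt_iff]; exact (Valuation.ne_zero_iff _).2 ha)).2 (hmax k hk)
    · rw [Finsupp.notMem_support_iff.1 hk]; simp)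
  refine ⟨a, u', ha, ?_, ?_⟩
  · rw [hu', ← mul_assoc, Algebra.TensorProduct.tmul_mul_tmul, mul_inv_cancel₀ ha, one_mul,
      ← Algebra.TensorProduct.one_def, one_mul]
  · intro h
    have h2 := aux_repr_map (IsScalarTower.toAlgHom K V (IsLocalRing.ResidueField V)) e u' i
    have h3 := aux_repr_map (IsScalarTower.toAlgHom K V L) e u' i
    rw [h, map_zero, Finsupp.zero_apply] at h2
    rw [hu'] at h3
    have h4 : algebraMap V L ((Algebra.TensorProduct.basis V e).repr u' i) = algebraMap V L 1 := by
      refine h3.symm.trans ?_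
      rw [map_one]
      refine (hcoord i).trans (inv_mul_cancel₀ ha)
    rw [IsFractionRing.injective V L h4, map_one] at h2
    exact zero_ne_one h2

theorem aux_unit {K L M V : Type*} [Field K] [CharZero K] [Field L] [Algebra K L]
    [Field M] [Algebra K M]
    (hrac : ∀ x : M, IsAlgebraic K x → x ∈ (algebraMap K M).range)
    [CommRing V] [IsDomain V] [ValuationRing V] [Algebra K V] [Algebra V L] [IsScalarTower K V L]
    [IsFractionRing V L] (u : L ⊗[K] M) (hu : IsUnit u) :
    ∃ (a : L) (u' : V ⊗[K] M), a ≠ 0 ∧ IsUnit u' ∧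
      u = (a ⊗ₜ 1) *
        Algebra.TensorProduct.map (IsScalarTower.toAlgHom K V L) (AlgHom.id K M) u' := by
  obtain ⟨t, ht⟩ := hu.exists_right_inv
  have hu0 := hu.ne_zero
  have ht0 : t ≠ 0 := by rintro rfl; simp at ht
  obtain ⟨a, u', ha, hau, hru⟩ := aux_scale (V := V) u hu0
  obtain ⟨b, t', hb, hbt, hrt⟩ := aux_scale (V := V) t ht0
  refine ⟨a, u', ha, ?_, hau⟩
  set ι := Algebra.TensorProduct.map (IsScalarTower.toAlgHom K V L) (AlgHom.id K M) with hι
  have hinj : Function.Injective ι := aux_map_injective _ (IsFractionRing.injective V L)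
  have hab : ((a * b) ⊗ₜ 1 : L ⊗[K] M) * ι (u' * t') = 1 := by
    rw [← ht, hau, hbt, map_mul]
    rw [show ((a * b) ⊗ₜ 1 : L ⊗[K] M) = (a ⊗ₜ 1) * (b ⊗ₜ 1) by simp]
    ring
  have hab0 : a * b ≠ 0 := mul_ne_zero ha hb
  rcases ValuationRing.isInteger_or_isInteger V (a * b) with ⟨d, hd⟩ | ⟨d, hd⟩
  · have h1 : (d ⊗ₜ 1) * (u' * t') = 1 := by
      apply hinj
      rw [map_mul, map_one, ← hab, ← hd]
      simp [ι]
    exact IsUnit.of_mul_eq_one ((d ⊗ₜ 1) * t') (by rw [← h1]; ring)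
  · have h1 : u' * t' = d ⊗ₜ 1 := by
      apply hinj
      have : ι (d ⊗ₜ 1) = (a * b)⁻¹ ⊗ₜ 1 := by rw [← hd]; simp [ι]
      rw [this]
      calc ι (u' * t') = ((a * b)⁻¹ ⊗ₜ 1) * (((a * b) ⊗ₜ 1 : L ⊗[K] M) * ι (u' * t')) := by
            rw [← mul_assoc, Algebra.TensorProduct.tmul_mul_tmul, inv_mul_cancel₀ hab0, one_mul,
              ← Algebra.TensorProduct.one_def, one_mul]
        _ = _ := by rw [hab, mul_one]
    have h2 := aux_domain hrac _ _ hru hrt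
    rw [← map_mul, h1, Algebra.TensorProduct.map_tmul] at h2
    have hdu : IsUnit d := by
      by_contra h
      apply h2
      have : IsScalarTower.toAlgHom K V (IsLocalRing.ResidueField V) d = 0 :=
        (IsLocalRing.residue_eq_zero_iff d).2 h
      rw [this, TensorProduct.zero_tmul]
    obtain ⟨c, hc⟩ := hdu.exists_right_inv
    exact IsUnit.of_mul_eq_one (t' * (c ⊗ₜ 1)) (by
      rw [← mul_assoc, h1, Algebra.TensorProduct.tmul_mul_tmul, hc, one_mul,
        Algebra.TensorProduct.one_def])

theorem aux_mem_range {K L : Type*} [Field K] [Field L] [Algebra K L]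
    (hrac : ∀ x : L, IsAlgebraic K x → x ∈ (algebraMap K L).range) (x : L)
    (h : ∀ V : ValuationSubring L, (∀ k : K, algebraMap K L k ∈ V) → x ∈ V) :
    x ∈ (algebraMap K L).range := by
  by_contra hx
  haveI : IsIntegrallyClosedIn (algebraMap K L).range L := by
    rw [Subring.isIntegrallyClosedIn_iff]
    intro y hy
    apply hrac
    apply IsIntegral.isAlgebraic
    obtain ⟨p, hp, hpy⟩ := hy
    have hl : p.map (algebraMap (algebraMap K L).range L) ∈ Polynomial.lifts (algebraMap K L) := by
      rw [Polynomial.lifts_iff_coeff_lifts]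
      intro n
      rw [Polynomial.coeff_map]
      exact (p.coeff n).2
    obtain ⟨q, hq, -, hqm⟩ := Polynomial.lifts_and_degree_eq_and_monic hl (hp.map _)
    refine ⟨q, hqm, ?_⟩
    rw [← Polynomial.eval_map, hq, Polynomial.eval_map, hpy]
  obtain ⟨V, hV, hxV⟩ := Subring.exists_le_valuationSubring_of_isIntegrallyClosedIn hx
  exact hxV (h V fun k => hV ⟨k, rfl⟩)

end Aux

/-- If `K` is relatively algebraically closed in the field extension
`L|K` (characteristic zero), then every unit of `L ⊗_K L` is of the form `a ⊗ b` with
`a, b ∈ L` nonzero. -/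
theorem isUnit_tensor_iff_of_relAlgClosed
    (K L : Type*) [Field K] [CharZero K] [Field L] [CharZero L] [Algebra K L]
    (hrac : ∀ x : L, IsAlgebraic K x → x ∈ (algebraMap K L).range)
    (u : L ⊗[K] L) (hu : IsUnit u) :
    ∃ a b : L, a ≠ 0 ∧ b ≠ 0 ∧ u = a ⊗ₜ[K] b := by
  obtain ⟨t, ht⟩ := hu.exists_right_inv
  let iL : L →ₐ[K] L ⊗[K] L := Algebra.TensorProduct.includeLeft
  let iR : L →ₐ[K] L ⊗[K] L := Algebra.TensorProduct.includeRight
  let p12 : L ⊗[K] L →ₐ[K] L ⊗[K] (L ⊗[K] L) := Algebra.TensorProduct.map (AlgHom.id K L) iL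
  let p13 : L ⊗[K] L →ₐ[K] L ⊗[K] (L ⊗[K] L) := Algebra.TensorProduct.map (AlgHom.id K L) iR
  let w := p12 u * p13 t
  have hw13 : w * p13 u = p12 u := by
    have : p13 t * p13 u = 1 := by rw [← map_mul, mul_comm, ht, map_one]
    simp only [w]
    rw [mul_assoc, this, mul_one]
  let e := Module.Basis.ofVectorSpace K (L ⊗[K] L)
  let B := Algebra.TensorProduct.basis L e
  have hcoord : ∀ i, ∃ k : K, Algebra.ofId K L k = B.repr w i := by
    intro i
    refine aux_mem_range hrac _ fun V hV => ?_
    letI : Algebra K V := RingHom.toAlgebra ((algebraMap K L).codRestrict V.toSubring hV)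
    haveI : IsScalarTower K V L := .of_algebraMap_eq fun _ => rfl
    obtain ⟨a, u', ha, hu', hau⟩ := aux_unit (V := V) hrac u hu
    obtain ⟨t', ht'⟩ := hu'.exists_right_inv
    let ιL := Algebra.TensorProduct.map (IsScalarTower.toAlgHom K V L) (AlgHom.id K L)
    let ιM := Algebra.TensorProduct.map (IsScalarTower.toAlgHom K V L) (AlgHom.id K (L ⊗[K] L))
    have ht2 : t = (a⁻¹ ⊗ₜ 1) * ιL t' := by
      have h1 : u * ((a⁻¹ ⊗ₜ 1) * ιL t') = 1 := by
        rw [hau]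
        calc _ = ((a ⊗ₜ 1) * (a⁻¹ ⊗ₜ 1)) * (ιL u' * ιL t') := by ring
          _ = 1 := by
            rw [← map_mul, ht', map_one, mul_one, Algebra.TensorProduct.tmul_mul_tmul,
              mul_inv_cancel₀ ha, one_mul, Algebra.TensorProduct.one_def]
      exact hu.mul_left_cancel (ht.trans h1.symm)
    have hcomm : ∀ (j : L →ₐ[K] L ⊗[K] L) (z : V ⊗[K] L),
        Algebra.TensorProduct.map (AlgHom.id K L) j (ιL z) =
          ιM (Algebra.TensorProduct.map (AlgHom.id K V) j z) := by
      intro j z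
      induction z with
      | zero => simp
      | add x y hx hy => simp only [map_add, hx, hy]
      | tmul x y => simp [ιL, ιM]
    have hwM : w = ιM (Algebra.TensorProduct.map (AlgHom.id K V) iL u' *
        Algebra.TensorProduct.map (AlgHom.id K V) iR t') := by
      rw [map_mul, ← hcomm, ← hcomm]
      simp only [w]
      rw [ht2, hau, map_mul, map_mul]
      change (p12 (a ⊗ₜ 1) * p12 (ιL u')) * (p13 (a⁻¹ ⊗ₜ 1) * p13 (ιL t')) =
        p12 (ιL u') * p13 (ιL t')
      have : p12 (a ⊗ₜ 1) * p13 (a⁻¹ ⊗ₜ 1) = 1 := by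
        simp only [p12, p13, Algebra.TensorProduct.map_tmul, map_one,
          Algebra.TensorProduct.tmul_mul_tmul, AlgHom.id_apply, mul_inv_cancel₀ ha, one_mul]
        rfl
      calc _ = (p12 (a ⊗ₜ 1) * p13 (a⁻¹ ⊗ₜ 1)) * (p12 (ιL u') * p13 (ιL t')) := by ring
        _ = _ := by rw [this, one_mul]
    rw [hwM]
    have := aux_repr_map (IsScalarTower.toAlgHom K V L) e
      (Algebra.TensorProduct.map (AlgHom.id K V) iL u' *
        Algebra.TensorProduct.map (AlgHom.id K V) iR t') i
    rw [show B.repr _ i = _ from this]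
    exact Subtype.property _
  obtain ⟨w0, hw0⟩ := aux_exists_lift (Algebra.ofId K L) e w hcoord
  obtain ⟨w', hw'⟩ : ∃ w' : L ⊗[K] L, w = 1 ⊗ₜ w' := by
    refine ⟨TensorProduct.lid K _ w0, ?_⟩
    rw [← hw0]
    clear hw0
    induction w0 with
    | zero => simp
    | add x y hx hy => rw [map_add, hx, hy, map_add, TensorProduct.tmul_add]
    | tmul x y =>
      simp [Algebra.ofId_apply, TensorProduct.tmul_smul, ← TensorProduct.smul_tmul',
        Algebra.algebraMap_eq_smul_one]
  let c := Module.Basis.ofVectorSpace K L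
  obtain ⟨b, hb⟩ := TensorProduct.eq_repr_basis_left c u
  have hbi : ∀ i, b i ⊗ₜ[K] (1 : L) = w' * (1 ⊗ₜ b i) := by
    classical
    intro i
    let f : L ⊗[K] (L ⊗[K] L) →ₗ[K] L ⊗[K] L :=
      (TensorProduct.lid K (L ⊗[K] L)).toLinearMap ∘ₗ (c.coord i).rTensor (L ⊗[K] L)
    have h1 := congrArg f hw13
    rw [hw', ← hb, Finsupp.sum, map_sum, map_sum, Finset.mul_sum, map_sum, map_sum] at h1
    have e1 : ∀ x : L, ∀ k, f (p12 (c k ⊗ₜ x)) = if k = i then x ⊗ₜ 1 else 0 := by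
      intro x k
      simp [f, p12, iL, Finsupp.single_apply]
    have e2 : ∀ x : L, ∀ k, f ((1 ⊗ₜ w') * p13 (c k ⊗ₜ x)) =
        if k = i then w' * (1 ⊗ₜ x) else 0 := by
      intro x k
      simp [f, p13, iR, Finsupp.single_apply]
    simp only [e1, e2, Finset.sum_ite_eq'] at h1
    by_cases hi : i ∈ b.support
    · rw [if_pos hi, if_pos hi] at h1
      exact h1.symm
    · rw [Finsupp.notMem_support_iff.1 hi]; simp
  have hsymm : ∀ i j, b i ⊗ₜ[K] b j = b j ⊗ₜ[K] b i := by
    intro i j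
    calc b i ⊗ₜ[K] b j = (b i ⊗ₜ[K] 1) * (1 ⊗ₜ b j) := by simp
      _ = (w' * (1 ⊗ₜ b j)) * (1 ⊗ₜ b i) := by rw [hbi]; ring
      _ = b j ⊗ₜ[K] b i := by rw [← hbi]; simp
  obtain ⟨j, hj⟩ : ∃ j, b j ≠ 0 := by
    by_contra! h
    have : b = 0 := Finsupp.ext h
    rw [this] at hb
    exact hu.ne_zero (by rw [← hb]; simp)
  obtain ⟨h, hh⟩ := Module.Projective.exists_dual_eq_one K hj
  have hprop : ∀ i, b i = h (b i) • b j := by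
    intro i
    have := congrArg ((TensorProduct.rid K L).toLinearMap ∘ₗ h.lTensor L) (hsymm i j)
    simpa [hh] using this
  have hfin : u = (∑ i ∈ b.support, h (b i) • c i) ⊗ₜ b j := by
    conv_lhs => rw [← hb]
    rw [TensorProduct.sum_tmul, Finsupp.sum]
    refine Finset.sum_congr rfl fun i _ => ?_
    conv_lhs => rw [hprop i]
    rw [TensorProduct.smul_tmul]
  refine ⟨_, b j, ?_, hj, hfin⟩
  intro h0
  rw [h0, TensorProduct.zero_tmul] at hfin
  exact hu.ne_zero hfin
end

section
/- Let L|K be an extension of fields of characteristic zero such that K is relatively algebraically closed in L, and let M be any field extension of K. Then M is integrally closed in L ⊗_K M: every element of L ⊗_K M that is integral over M lies in the image of M (i.e., K is absolutely algebraically closed in L). -/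
open scoped TensorProduct

theorem aux_smooth (K L S : Type*) [Field K] [Field L] [Algebra K L] [CommRing S] [Algebra K S]
    [Algebra.Smooth K S]
    (hrac : ∀ x : L, IsAlgebraic K x → x ∈ (algebraMap K L).range)
    (y : S ⊗[K] L) (hy : IsIntegral S y) : ∃ a : S, y = a ⊗ₜ[K] (1 : L) := by
  obtain ⟨z, hz⟩ := (TensorProduct.toIntegralClosure_bijective_of_smooth
    (R := K) (S := S) (B := L)).2 ⟨y, hy⟩
  have hz' : Algebra.TensorProduct.map (.id S S) (integralClosure K L).val z = y :=
    congrArg Subtype.val hz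
  rw [← hz']
  clear hz hz'
  induction z with
  | zero => exact ⟨0, by simp⟩
  | add u v hu hv =>
    obtain ⟨a, ha⟩ := hu
    obtain ⟨b, hb⟩ := hv
    exact ⟨a + b, by rw [map_add, ha, hb, TensorProduct.add_tmul]⟩
  | tmul s l =>
    obtain ⟨k, hk⟩ := hrac l.1 (IsIntegral.isAlgebraic l.2)
    refine ⟨k • s, ?_⟩
    rw [TensorProduct.smul_tmul]
    simp [← hk, Algebra.algebraMap_eq_smul_one]

theorem aux_generic (K A : Type*) [Field K] [CharZero K] [CommRing A] [IsDomain A] [Algebra K A]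
    [Algebra.FiniteType K A] : ∃ f : A, f ≠ 0 ∧ Algebra.Smooth K (Localization.Away f) := by
  have : Algebra.FinitePresentation K A := Algebra.FinitePresentation.of_finiteType.mp inferInstance
  have : Algebra.IsSmoothAt K (⊥ : Ideal A) := by
    have : IsFractionRing A (Localization.AtPrime (⊥ : Ideal A)) := by
      have h : (⊥ : Ideal A).primeCompl = nonZeroDivisors A := by
        ext; simp [Ideal.primeCompl]
      unfold IsFractionRing
      rw [← h]
      infer_instance
    let : Field (Localization.AtPrime (⊥ : Ideal A)) := IsFractionRing.toField A
    exact Algebra.FormallySmooth.of_perfectField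
  obtain ⟨f, hf, h⟩ := Algebra.IsSmoothAt.exists_notMem_smooth (R := K) (⊥ : Ideal A)
  exact ⟨f, by simpa using hf, h⟩

theorem aux_descent (K L M : Type*) [Field K] [Field L] [Algebra K L] [Field M] [Algebra K M]
    (x : M ⊗[K] L) : ∃ s : Finset M, ∀ A : Subalgebra K M, (s : Set M) ⊆ A →
      x ∈ (Algebra.TensorProduct.map A.val (.id K L)).range := by
  classical
  induction x with
  | zero => exact ⟨∅, fun A _ => zero_mem _⟩
  | add u v hu hv =>
    obtain ⟨s, hs⟩ := hu
    obtain ⟨t, ht⟩ := hv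
    refine ⟨s ∪ t, fun A h => ?_⟩
    rw [Finset.coe_union, Set.union_subset_iff] at h
    exact add_mem (hs A h.1) (ht A h.2)
  | tmul m l =>
    refine ⟨{m}, fun A h => ⟨(⟨m, by simpa using h⟩ : A) ⊗ₜ l, by simp⟩⟩

theorem aux_main (K L M : Type*) [Field K] [CharZero K] [Field L] [Algebra K L] [Field M]
    [Algebra K M]
    (hrac : ∀ x : L, IsAlgebraic K x → x ∈ (algebraMap K L).range)
    (x : M ⊗[K] L) (hx : IsIntegral M x) : ∃ a : M, x = a ⊗ₜ[K] (1 : L) := by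
  classical
  obtain ⟨p, hp, hpx⟩ := hx
  obtain ⟨s, hs⟩ := aux_descent K L M x
  let A : Subalgebra K M := Algebra.adjoin K ((s ∪ p.coeffs : Finset M) : Set M)
  have hA : ((s ∪ p.coeffs : Finset M) : Set M) ⊆ A := Algebra.subset_adjoin
  rw [Finset.coe_union, Set.union_subset_iff] at hA
  have : Algebra.FiniteType K A :=
    (Subalgebra.fg_iff_finiteType A).mp ⟨_, rfl⟩
  obtain ⟨y, hy⟩ := hs A hA.1
  have hy : Algebra.TensorProduct.map A.val (.id K L) y = x := hy
  have hinj : Function.Injective (Algebra.TensorProduct.map A.val (AlgHom.id K L)) :=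
    Module.Flat.rTensor_preserves_injective_linearMap (M := L) A.val.toLinearMap
      Subtype.val_injective
  have hlift : p ∈ Polynomial.lifts (algebraMap A M) := by
    rw [Polynomial.lifts_iff_coeff_lifts]
    intro n
    by_cases h : p.coeff n = 0
    · exact ⟨0, by simp [h]⟩
    · exact ⟨⟨p.coeff n, hA.2 (Polynomial.coeff_mem_coeffs h)⟩, rfl⟩
  obtain ⟨q, hq, -, hqm⟩ := Polynomial.lifts_and_natDegree_eq_and_monic hlift hp
  have hyint : IsIntegral A y := by
    refine ⟨q, hqm, hinj ?_⟩
    rw [map_zero, ← hpx, ← hq, Polynomial.eval₂_map, ← hy]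
    have := Polynomial.hom_eval₂ q (algebraMap A (A ⊗[K] L))
      (Algebra.TensorProduct.map A.val (AlgHom.id K L)).toRingHom y
    refine this.trans ?_
    congr 1
  obtain ⟨f, hf, hsm⟩ := aux_generic K A
  let φ : A →ₐ[K] Localization.Away f := IsScalarTower.toAlgHom K A _
  let ψ : Localization.Away f →ₐ[K] M := IsLocalization.liftAlgHom (M := Submonoid.powers f)
    (f := A.val) (by
      rintro ⟨_, n, rfl⟩
      simpa using fun h => (hf h).elim)
  have hψφ : ψ.comp φ = A.val := by
    ext a
    simp [ψ, φ]
  have hy2 : IsIntegral (Localization.Away f)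
      (Algebra.TensorProduct.map φ (AlgHom.id K L) y) := by
    refine hyint.map_of_comp_eq φ.toRingHom
      (Algebra.TensorProduct.map φ (AlgHom.id K L)).toRingHom ?_
    ext a
    simp [Algebra.TensorProduct.algebraMap_apply]
  obtain ⟨a, ha⟩ := aux_smooth K L _ hrac _ hy2
  refine ⟨ψ a, ?_⟩
  have h := congrArg (Algebra.TensorProduct.map ψ (AlgHom.id K L)) ha
  rw [← AlgHom.comp_apply, ← Algebra.TensorProduct.map_comp, hψφ] at h
  simpa [← hy] using h

/-- If `K` is relatively algebraically closed in the field extension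
`L|K` (characteristic zero) and `M` is any field extension of `K`, then `M` is integrally
closed in `L ⊗_K M` (regarded as an `M`-algebra via the second factor): every element of
`L ⊗_K M` integral over `M` lies in the image of `M`. -/
theorem integrallyClosed_in_tensor_of_relAlgClosed
    (K L M : Type*) [Field K] [CharZero K] [Field L] [CharZero L] [Field M] [CharZero M]
    [Algebra K L] [Algebra K M]
    (hrac : ∀ x : L, IsAlgebraic K x → x ∈ (algebraMap K L).range) :
    letI : Algebra M (L ⊗[K] M) := Algebra.TensorProduct.rightAlgebra
    ∀ x : L ⊗[K] M, IsIntegral M x → x ∈ (algebraMap M (L ⊗[K] M)).range := by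
  letI : Algebra M (L ⊗[K] M) := Algebra.TensorProduct.rightAlgebra
  intro x hx
  have h : IsIntegral M (Algebra.TensorProduct.comm K L M x) := by
    refine hx.map_of_comp_eq (RingHom.id M)
      (Algebra.TensorProduct.comm K L M).toAlgHom.toRingHom ?_
    ext a
    simp [Algebra.TensorProduct.algebraMap_apply, Algebra.TensorProduct.right_algebraMap_apply]
  obtain ⟨a, ha⟩ := aux_main K L M hrac _ h
  refine ⟨a, (Algebra.TensorProduct.comm K L M).injective ?_⟩
  rw [ha]
  simp [Algebra.TensorProduct.right_algebraMap_apply]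
end
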